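/- arXiv:2407.15547 — 3 statements merged into one kernel-verified Lean document; each statement's English description precedes it below -/
import Mathlib

section
/- Let −∞ < β < α < 0 and r > 0. For every τ ∈ V_{α,r} with associated extension F of its Laplace transform, and every ε > 0, there exists σ ∈ V_β, with analytic extension G of its Laplace transform to the half-plane Re s > β, such that sup_{x≥0}|τ'(x) − σ'(x)| + sup_{s∈R̄_{α,r}} |F(s) − G(s)| < ε. That is, V_β is dense in V_{α,r}. -/
open Filter Set MeasureTheory

/-- The Laplace transform `L{f;s} = ∫_0^∞ f(x) e^{-sx} dx`. -/
noncomputable def Laplace (f : ℝ → ℂ) (s : ℂ) : ℂ :=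
  ∫ x in Set.Ioi (0 : ℝ), f x * Complex.exp (-(s * (x : ℂ)))

/-- The closed rectangle `R̄_{α,r} = {s : α ≤ Re s ≤ 1, |Im s| ≤ r}`. -/
def Rbar (α r : ℝ) : Set ℂ := {s : ℂ | α ≤ s.re ∧ s.re ≤ 1 ∧ |s.im| ≤ r}

/-- The open rectangle `R_{α,r} = {s : α < Re s < 1, |Im s| < r}`. -/
def Ropen (α r : ℝ) : Set ℂ := {s : ℂ | α < s.re ∧ s.re < 1 ∧ |s.im| < r}

/-- The exponential `e^{wx}`, its derivative, and its Laplace transform. -/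
noncomputable def expTriple (w : ℂ) : (ℝ → ℂ) × (ℝ → ℂ) × (ℂ → ℂ) :=
  (fun x => Complex.exp (w * x), fun x => w * Complex.exp (w * x), fun s => 1 / (s - w))

/-- Exponential sums with exponents in `Re w < β`. -/
noncomputable def ExpS (β : ℝ) : Submodule ℂ ((ℝ → ℂ) × (ℝ → ℂ) × (ℂ → ℂ)) :=
  Submodule.span ℂ (Set.image expTriple {w : ℂ | w.re < β})

/-- The pair is approximable by exponential sums. -/
def Close (β α r : ℝ) (τ' : ℝ → ℂ) (F : ℂ → ℂ) : Prop :=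
  ∀ ε > 0, ∃ p ∈ ExpS β, (∀ x : ℝ, 0 ≤ x → ‖τ' x - p.2.1 x‖ ≤ ε) ∧
    ∀ s ∈ Rbar α r, ‖F s - p.2.2 s‖ ≤ ε

lemma expTriple_mem {β : ℝ} {w : ℂ} (h : w.re < β) : expTriple w ∈ ExpS β :=
  Submodule.subset_span ⟨w, h, rfl⟩

lemma laplace_exp {w s : ℂ} (h : w.re < s.re) :
    IntegrableOn (fun x : ℝ => Complex.exp (w * x) * Complex.exp (-(s * (x : ℂ)))) (Ioi 0) ∧
    ∫ x in Ioi (0:ℝ), Complex.exp (w * x) * Complex.exp (-(s * (x : ℂ))) = 1 / (s - w) := by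
  have e : ∀ x : ℝ, Complex.exp (w * x) * Complex.exp (-(s * (x : ℂ)))
      = Complex.exp ((w - s) * x) := by
    intro x; rw [← Complex.exp_add]; ring_nf
  have hr : (w - s).re < 0 := by simp; linarith
  simp only [e]
  refine ⟨integrableOn_exp_mul_complex_Ioi hr 0, ?_⟩
  rw [integral_exp_mul_complex_Ioi hr 0]
  have : s - w ≠ 0 := by
    intro h0; have : (s - w).re = 0 := by rw [h0]; rfl
    simp at this; linarith
  have h2 : w - s ≠ 0 := by
    intro h0; apply this; rw [← neg_sub, h0, neg_zero]
  simp
  rw [← neg_sub w s, inv_neg, neg_div]; simp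

/-- All the properties of exponential sums. -/
structure ExpProps (β : ℝ) (p : (ℝ → ℂ) × (ℝ → ℂ) × (ℂ → ℂ)) : Prop where
  hd : ∀ x : ℝ, HasDerivAt p.1 (p.2.1 x) x
  hc : Continuous p.2.1
  ht : Tendsto p.2.1 atTop (nhds 0)
  hG : DifferentiableOn ℂ p.2.2 {s : ℂ | β < s.re}
  hi : ∀ s : ℂ, 0 < s.re →
    IntegrableOn (fun x : ℝ => p.1 x * Complex.exp (-(s * (x : ℂ)))) (Ioi 0)
  hL : ∀ s : ℂ, 0 < s.re → p.2.2 s = Laplace p.1 s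
  hi' : ∀ s : ℂ, 0 < s.re →
    IntegrableOn (fun x : ℝ => p.2.1 x * Complex.exp (-(s * (x : ℂ)))) (Ioi 0)
  hL' : ∀ s : ℂ, 0 < s.re → s * p.2.2 s = p.1 0 + Laplace p.2.1 s

lemma expProps {β : ℝ} (hβ : β < 0) {p} (hp : p ∈ ExpS β) : ExpProps β p := by
  induction hp using Submodule.span_induction with
  | mem p hp =>
    obtain ⟨w, hw, rfl⟩ := hp
    have hw : w.re < β := hw
    have key : ∀ s : ℂ, 0 < s.re → w.re < s.re := fun s hs => by linarith
    constructor
    · intro x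
      have : HasDerivAt (fun x : ℝ => w * (x : ℂ)) w x := by
        simpa using (Complex.ofRealCLM.hasDerivAt (x := x)).const_mul w
      simpa [expTriple, mul_comm] using this.cexp
    · simp only [expTriple]; fun_prop
    · simp only [expTriple]
      rw [tendsto_zero_iff_norm_tendsto_zero]
      have : (fun x : ℝ => ‖w * Complex.exp (w * x)‖) = fun x => ‖w‖ * Real.exp (w.re * x) := by
        ext x; simp [Complex.norm_exp]
      rw [this]
      have h1 : Tendsto (fun x : ℝ => w.re * x) atTop atBot :=
        tendsto_id.const_mul_atTop_of_neg (by linarith)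
      simpa using (Real.tendsto_exp_atBot.comp h1).const_mul ‖w‖
    · intro s hs
      have hs : β < s.re := hs
      have : s - w ≠ 0 := by
        intro h0; have : (s - w).re = 0 := by rw [h0]; rfl
        simp at this; linarith
      simp only [expTriple]
      apply DifferentiableAt.differentiableWithinAt
      fun_prop (disch := assumption)
    · intro s hs; exact (laplace_exp (key s hs)).1
    · intro s hs; exact (laplace_exp (key s hs)).2.symm
    · intro s hs; simp only [expTriple, mul_assoc]; exact (laplace_exp (key s hs)).1.const_mul w
    · intro s hs
      have := (laplace_exp (key s hs)).2
      have h0 : s - w ≠ 0 := by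
        intro h0; have : (s - w).re = 0 := by rw [h0]; rfl
        simp at this; linarith
      simp only [expTriple, Laplace, mul_assoc, integral_const_mul, this]
      field_simp
      simp
  | zero =>
    constructor <;> simp [Laplace]
    · exact continuous_const
    · exact tendsto_const_nhds
  | add p q _ _ hp hq =>
    have e : ∀ (f g : ℝ → ℂ) (s : ℂ), (fun x : ℝ => (f + g) x * Complex.exp (-(s * (x : ℂ)))) =
      fun x : ℝ => f x * Complex.exp (-(s * (x : ℂ))) + g x * Complex.exp (-(s * (x : ℂ))) := by
      intro f g s; ext x; simp [add_mul]
    constructor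
    · intro x; exact (hp.hd x).add (hq.hd x)
    · exact hp.hc.add hq.hc
    · have := hp.ht.add hq.ht
      rw [add_zero] at this; exact this
    · exact hp.hG.add hq.hG
    · intro s hs; simp only [Prod.fst_add, e]; exact (hp.hi s hs).add (hq.hi s hs)
    · intro s hs
      simp only [Prod.fst_add, Prod.snd_add, Laplace, e]
      rw [integral_add (hp.hi s hs) (hq.hi s hs), Pi.add_apply, hp.hL s hs, hq.hL s hs]; rfl
    · intro s hs; simp only [Prod.fst_add, Prod.snd_add, e]; exact (hp.hi' s hs).add (hq.hi' s hs)
    · intro s hs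
      simp only [Prod.fst_add, Prod.snd_add, Laplace, e]
      rw [integral_add (hp.hi' s hs) (hq.hi' s hs), Pi.add_apply, mul_add, hp.hL' s hs,
        hq.hL' s hs]
      simp only [Laplace, Pi.add_apply]; ring
  | smul c p _ hp =>
    have e : ∀ (f : ℝ → ℂ) (s : ℂ), (fun x : ℝ => (c • f) x * Complex.exp (-(s * (x : ℂ)))) =
      fun x : ℝ => c * (f x * Complex.exp (-(s * (x : ℂ)))) := by
      intro f s; ext x; simp [mul_assoc]
    constructor
    · intro x; exact (hp.hd x).const_smul c
    · exact hp.hc.const_smul c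
    · have := hp.ht.const_mul c
      rw [mul_zero] at this; exact this
    · exact hp.hG.const_smul c
    · intro s hs; simp only [Prod.smul_fst, e]; exact (hp.hi s hs).const_mul c
    · intro s hs
      simp only [Prod.smul_fst, Prod.smul_snd, Laplace]
      rw [e, integral_const_mul, Pi.smul_apply, hp.hL s hs, smul_eq_mul]; rfl
    · intro s hs; simp only [Prod.smul_fst, Prod.smul_snd, e]; exact (hp.hi' s hs).const_mul c
    · intro s hs
      have := hp.hL' s hs
      simp only [Prod.smul_fst, Prod.smul_snd, Laplace] at this ⊢
      rw [e, integral_const_mul, Pi.smul_apply, Pi.smul_apply, smul_eq_mul, smul_eq_mul]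
      linear_combination c * this

lemma Close.of_approx {β α r : ℝ} {τ' : ℝ → ℂ} {F : ℂ → ℂ}
    (h : ∀ ε > 0, ∃ (g : ℝ → ℂ) (H : ℂ → ℂ), Close β α r g H ∧
      (∀ x : ℝ, 0 ≤ x → ‖τ' x - g x‖ ≤ ε) ∧ ∀ s ∈ Rbar α r, ‖F s - H s‖ ≤ ε) :
    Close β α r τ' F := by
  intro ε hε
  obtain ⟨g, H, hc, h1, h2⟩ := h (ε / 2) (by positivity)
  obtain ⟨p, hp, h3, h4⟩ := hc (ε / 2) (by positivity)
  refine ⟨p, hp, fun x hx => ?_, fun s hs => ?_⟩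
  · have := norm_sub_le_norm_sub_add_norm_sub (τ' x) (g x) (p.2.1 x)
    linarith [h1 x hx, h3 x hx]
  · have := norm_sub_le_norm_sub_add_norm_sub (F s) (H s) (p.2.2 s)
    linarith [h2 s hs, h4 s hs]

/-! ### Laplace transforms of exponentially bounded functions -/

lemma norm_exp_neg_mul (s : ℂ) (x : ℝ) :
    ‖Complex.exp (-(s * (x : ℂ)))‖ = Real.exp (-(s.re * x)) := by
  simp [Complex.norm_exp]

lemma laplace_integrable {f : ℝ → ℂ} (hf : ContinuousOn f (Ici 0)) {C a : ℝ}
    (hb : ∀ x : ℝ, 0 ≤ x → ‖f x‖ ≤ C * Real.exp (-(a * x))) {s : ℂ} (hs : -a < s.re) :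
    IntegrableOn (fun x : ℝ => f x * Complex.exp (-(s * (x : ℂ)))) (Ioi 0) := by
  have hi : IntegrableOn (fun x : ℝ => C * Real.exp ((-(a + s.re)) * x)) (Ioi 0) :=
    (integrableOn_exp_mul_Ioi (by linarith) 0).const_mul C
  refine Integrable.mono' hi ?_ ?_
  · refine ContinuousOn.aestronglyMeasurable ?_ measurableSet_Ioi
    exact (hf.mono Ioi_subset_Ici_self).mul (by fun_prop)
  · refine (ae_restrict_iff' measurableSet_Ioi).2 (Eventually.of_forall fun x hx => ?_)
    rw [norm_mul, norm_exp_neg_mul]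
    calc _ ≤ C * Real.exp (-(a * x)) * Real.exp (-(s.re * x)) := by
          gcongr; exact hb x (le_of_lt hx)
      _ = _ := by rw [mul_assoc, ← Real.exp_add]; ring_nf

lemma laplace_norm_le {f : ℝ → ℂ} {C a : ℝ}
    (hb : ∀ x : ℝ, 0 ≤ x → ‖f x‖ ≤ C * Real.exp (-(a * x))) {s : ℂ} (hs : -a < s.re) :
    ‖Laplace f s‖ ≤ C / (a + s.re) := by
  have hi : IntegrableOn (fun x : ℝ => C * Real.exp ((-(a + s.re)) * x)) (Ioi 0) :=
    (integrableOn_exp_mul_Ioi (by linarith) 0).const_mul C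
  have : ‖Laplace f s‖ ≤ ∫ x in Ioi (0:ℝ), C * Real.exp ((-(a + s.re)) * x) := by
    refine norm_integral_le_of_norm_le hi ?_
    refine (ae_restrict_iff' measurableSet_Ioi).2 (Eventually.of_forall fun x hx => ?_)
    rw [norm_mul, norm_exp_neg_mul]
    calc _ ≤ C * Real.exp (-(a * x)) * Real.exp (-(s.re * x)) := by
          gcongr; exact hb x (le_of_lt hx)
      _ = _ := by rw [mul_assoc, ← Real.exp_add]; ring_nf
  refine this.trans_eq ?_
  rw [integral_const_mul, integral_exp_mul_Ioi (by linarith) 0]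
  rw [mul_zero, Real.exp_zero, neg_div_neg_eq, mul_one_div]

lemma laplace_deriv {f f' : ℝ → ℂ} (hd : ∀ x, HasDerivAt f (f' x) x) (hc : Continuous f')
    {C a : ℝ}
    (hb : ∀ x : ℝ, 0 ≤ x → ‖f x‖ ≤ C * Real.exp (-(a * x)))
    (hb' : ∀ x : ℝ, 0 ≤ x → ‖f' x‖ ≤ C * Real.exp (-(a * x))) {s : ℂ} (hs : -a < s.re) :
    Laplace f' s = s * Laplace f s - f 0 := by
  have hcf : Continuous f := continuous_iff_continuousAt.2 fun x => (hd x).continuousAt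
  have i1 := laplace_integrable hcf.continuousOn hb hs
  have i2 := laplace_integrable hc.continuousOn hb' hs
  have hD : ∀ x : ℝ, HasDerivAt (fun x : ℝ => f x * Complex.exp (-(s * (x : ℂ))))
      (f' x * Complex.exp (-(s * (x : ℂ))) - s * (f x * Complex.exp (-(s * (x : ℂ))))) x := by
    intro x
    have : HasDerivAt (fun x : ℝ => -(s * (x : ℂ))) (-s) x := by
      simpa using (Complex.ofRealCLM.hasDerivAt (x := x)).const_mul (-s)
    refine ((hd x).mul this.cexp).congr_deriv ?_
    ring
  have hlim : Tendsto (fun x : ℝ => f x * Complex.exp (-(s * (x : ℂ)))) atTop (nhds 0) := by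
    have h1 : Tendsto (fun x : ℝ => (-(a + s.re)) * x) atTop atBot :=
        tendsto_id.const_mul_atTop_of_neg (by linarith)
    have h2 : Tendsto (fun x : ℝ => C * Real.exp ((-(a + s.re)) * x)) atTop (nhds 0) := by
      simpa using (Real.tendsto_exp_atBot.comp h1).const_mul C
    refine squeeze_zero_norm' ?_ h2
    filter_upwards [eventually_ge_atTop 0] with x hx
    rw [norm_mul, norm_exp_neg_mul]
    calc _ ≤ C * Real.exp (-(a * x)) * Real.exp (-(s.re * x)) := by
          gcongr; exact hb x hx
      _ = _ := by rw [mul_assoc, ← Real.exp_add]; ring_nf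
  have := integral_Ioi_of_hasDerivAt_of_tendsto' (a := 0) (fun x _ => hD x)
    (i2.sub (i1.const_mul s)) hlim
  rw [integral_sub i2 (i1.const_mul s), integral_const_mul] at this
  simp only [Laplace]
  simp at this
  linear_combination this


/-- Good pairs: `C¹` functions on the line vanishing on the negative axis, with exponential decay,
with a Laplace transform extending to a larger rectangle. -/
structure Good (α r α₁ r₁ a : ℝ) (τ τ' : ℝ → ℂ) (F : ℂ → ℂ) : Prop where
  hd : ∀ x, HasDerivAt τ (τ' x) x
  hc : Continuous τ'
  h0 : ∀ x ≤ 0, τ x = 0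
  h0' : ∀ x ≤ 0, τ' x = 0
  hb : ∃ C, 0 ≤ C ∧ (∀ x : ℝ, 0 ≤ x → ‖τ x‖ ≤ C * Real.exp (-(a * x))) ∧
    ∀ x : ℝ, 0 ≤ x → ‖τ' x‖ ≤ C * Real.exp (-(a * x))
  hF : DifferentiableOn ℂ F (Ropen α₁ r₁)
  hFc : ContinuousOn F (Rbar α r)
  hL : ∀ s : ℂ, -a < s.re → s.re ≤ 1 → |s.im| < r₁ → F s = Laplace τ s

/-- Decay of the Laplace transform on a vertical line. -/
def Dec (k : ℕ) (a : ℝ) (τ : ℝ → ℂ) : Prop :=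
  ∃ C, ∀ w : ℂ, w.re = -(a / 2) → ‖w‖ ^ k * ‖Laplace τ w‖ ≤ C

lemma Good.dec_one {α r α₁ r₁ a : ℝ} {τ τ' : ℝ → ℂ} {F : ℂ → ℂ} (ha : 0 < a)
    (h : Good α r α₁ r₁ a τ τ' F) : Dec 1 a τ := by
  obtain ⟨C, -, h1, h2⟩ := h.hb
  refine ⟨C / (a / 2), fun w hw => ?_⟩
  have hw' : -a < w.re := by rw [hw]; linarith
  have e := laplace_deriv h.hd h.hc h1 h2 hw'
  rw [h.h0 0 le_rfl, sub_zero] at e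
  rw [pow_one, ← norm_mul, ← e]
  refine (laplace_norm_le h2 hw').trans_eq ?_
  rw [hw]; ring_nf

/-- One sided exponential smoothing. -/
noncomputable def smooth (N : ℝ) (f : ℝ → ℂ) (x : ℝ) : ℂ :=
  (N : ℂ) * Complex.exp (-((N : ℂ) * x)) * ∫ y in (0:ℝ)..x, Complex.exp ((N : ℂ) * y) * f y

lemma smooth_zero (N : ℝ) {f : ℝ → ℂ} (h : ∀ x ≤ 0, f x = 0) : ∀ x ≤ 0, smooth N f x = 0 := by
  intro x hx
  have : ∫ y in (0:ℝ)..x, Complex.exp ((N : ℂ) * y) * f y = ∫ y in (0:ℝ)..x, (0:ℂ) := by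
    apply intervalIntegral.integral_congr
    intro y hy
    rw [uIcc_of_ge hx] at hy
    simp [h y hy.2]
  simp [smooth, this]

lemma hasDerivAt_cexp_mul (w : ℂ) (x : ℝ) :
    HasDerivAt (fun x : ℝ => Complex.exp (w * x)) (w * Complex.exp (w * x)) x := by
  have : HasDerivAt (fun x : ℝ => w * (x : ℂ)) w x := by
    simpa using (Complex.ofRealCLM.hasDerivAt (x := x)).const_mul w
  simpa [mul_comm] using this.cexp

lemma smooth_deriv (N : ℝ) {f : ℝ → ℂ} (hf : Continuous f) (x : ℝ) :
    HasDerivAt (smooth N f) (N * (f x - smooth N f x)) x := by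
  have hc : Continuous fun y : ℝ => Complex.exp ((N : ℂ) * y) * f y := by fun_prop
  have h1 := hc.integral_hasStrictDerivAt 0 x |>.hasDerivAt
  have h2 := (hasDerivAt_cexp_mul (-(N:ℂ)) x).const_mul (N : ℂ)
  have h3 := h2.mul h1
  have e : Complex.exp (-(N:ℂ) * x) * Complex.exp ((N:ℂ) * x) = 1 := by
    rw [← Complex.exp_add]; simp
  have : smooth N f = (fun x : ℝ => (N : ℂ) * Complex.exp (-(N : ℂ) * x)) *
      fun x : ℝ => ∫ y in (0:ℝ)..x, Complex.exp ((N : ℂ) * y) * f y := by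
    ext x; simp [smooth]
  rw [this]
  refine h3.congr_deriv ?_
  simp only [Pi.mul_apply]
  linear_combination (N * f x : ℂ) * e

lemma smooth_eq (N : ℝ) {τ τ' : ℝ → ℂ} (hd : ∀ x, HasDerivAt τ (τ' x) x)
    (hc : Continuous τ') (h0 : τ 0 = 0) (x : ℝ) :
    smooth N τ' x = N * (τ x - smooth N τ x) := by
  have hcf : Continuous τ := continuous_iff_continuousAt.2 fun x => (hd x).continuousAt
  have hc1 : Continuous fun y : ℝ => Complex.exp ((N : ℂ) * y) * τ y := by fun_prop
  have hc2 : Continuous fun y : ℝ => Complex.exp ((N : ℂ) * y) * τ' y := by fun_prop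
  have hD : ∀ y ∈ uIcc 0 x, HasDerivAt (fun y : ℝ => Complex.exp ((N : ℂ) * y) * τ y)
      (N * (Complex.exp ((N : ℂ) * y) * τ y) + Complex.exp ((N : ℂ) * y) * τ' y) y := by
    intro y _
    refine ((hasDerivAt_cexp_mul N y).mul (hd y)).congr_deriv ?_
    ring
  have := intervalIntegral.integral_eq_sub_of_hasDerivAt hD
    (((hc1.const_mul (N:ℂ)).add hc2).intervalIntegrable 0 x)
  rw [intervalIntegral.integral_add ((hc1.const_mul (N:ℂ)).intervalIntegrable 0 x)
    (hc2.intervalIntegrable 0 x), intervalIntegral.integral_const_mul] at this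
  have e : Complex.exp (-((N:ℂ) * x)) * Complex.exp ((N:ℂ) * x) = 1 := by
    rw [← Complex.exp_add]; simp
  simp only [smooth]
  rw [h0] at this
  linear_combination (N : ℂ) * Complex.exp (-((N:ℂ) * x)) * this + N * τ x * e

lemma smooth_norm_le {N : ℝ} (hN : 0 < N) {f : ℝ → ℂ} {b : ℝ → ℝ}
    (hb : Continuous b) (h : ∀ x, 0 ≤ x → ‖f x‖ ≤ b x) {x : ℝ} (hx : 0 ≤ x) :
    ‖smooth N f x‖ ≤ N * Real.exp (-(N * x)) * ∫ y in (0:ℝ)..x, Real.exp (N * y) * b y := by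
  rw [smooth, norm_mul, norm_mul, Complex.norm_real, Real.norm_of_nonneg hN.le]
  have : ‖Complex.exp (-((N:ℂ) * x))‖ = Real.exp (-(N * x)) := by simp [Complex.norm_exp]
  rw [this]
  gcongr
  refine intervalIntegral.norm_integral_le_of_norm_le hx ?_
    ((by fun_prop : Continuous fun y => Real.exp (N * y) * b y).intervalIntegrable _ _)
  refine Eventually.of_forall fun y hy => ?_
  rw [norm_mul]
  have : ‖Complex.exp ((N:ℂ) * y)‖ = Real.exp (N * y) := by simp [Complex.norm_exp]
  rw [this]
  gcongr
  exact h y hy.1.le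

lemma smooth_bound {N a C : ℝ} (hN : 0 < N) (ha : a < N) (hC : 0 ≤ C) {f : ℝ → ℂ}
    (h : ∀ x, 0 ≤ x → ‖f x‖ ≤ C * Real.exp (-(a * x))) {x : ℝ} (hx : 0 ≤ x) :
    ‖smooth N f x‖ ≤ (N * C / (N - a)) * Real.exp (-(a * x)) := by
  refine (smooth_norm_le hN (by fun_prop) h hx).trans ?_
  have hna : 0 < N - a := by linarith
  have e : ∀ y, Real.exp (N * y) * (C * Real.exp (-(a * y))) = C * Real.exp ((N - a) * y) := by
    intro y
    rw [mul_left_comm, ← Real.exp_add]; ring_nf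
  simp only [e]
  have : ∫ y in (0:ℝ)..x, C * Real.exp ((N - a) * y)
      = C / (N - a) * Real.exp ((N - a) * x) - C / (N - a) := by
    have hD : ∀ y ∈ uIcc 0 x, HasDerivAt (fun y : ℝ => C / (N - a) * Real.exp ((N - a) * y))
        (C * Real.exp ((N - a) * y)) y := by
      intro y _
      have := (((hasDerivAt_id y).const_mul (N - a)).exp).const_mul (C / (N - a))
      refine this.congr_deriv ?_
      simp; field_simp
    rw [intervalIntegral.integral_eq_sub_of_hasDerivAt hD
      ((by fun_prop : Continuous fun y => C * Real.exp ((N - a) * y)).intervalIntegrable _ _)]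
    simp
  rw [this]
  calc _ ≤ N * Real.exp (-(N * x)) * (C / (N - a) * Real.exp ((N - a) * x)) := by
        gcongr
        have : 0 ≤ C / (N - a) := by positivity
        linarith
    _ = N * C / (N - a) * (Real.exp (-(N * x)) * Real.exp ((N - a) * x)) := by ring
    _ = _ := by rw [← Real.exp_add]; ring_nf

lemma smooth_sub_le {N ε K : ℝ} (hN : 0 < N) (hε : 0 ≤ ε) (hK : 0 ≤ K) {g : ℝ → ℂ}
    (hg : Continuous g) (h0 : g 0 = 0)
    (h : ∀ x y, ‖g x - g y‖ ≤ ε + K * |x - y|) {x : ℝ} (hx : 0 ≤ x) :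
    ‖g x - smooth N g x‖ ≤ ε + K / N := by
  -- the constant function `g x`
  have h1 : smooth N (fun _ => g x) x = g x - Complex.exp (-((N:ℂ) * x)) * g x := by
    have hD : ∀ y ∈ uIcc 0 x, HasDerivAt (fun y : ℝ => g x / N * Complex.exp ((N : ℂ) * y))
        (Complex.exp ((N : ℂ) * y) * g x) y := by
      intro y _
      refine ((hasDerivAt_cexp_mul N y).const_mul (g x / N)).congr_deriv ?_
      have : (N : ℂ) ≠ 0 := by exact_mod_cast hN.ne'
      field_simp
    rw [smooth, intervalIntegral.integral_eq_sub_of_hasDerivAt hD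
      ((by fun_prop : Continuous fun y : ℝ => Complex.exp ((N : ℂ) * y) * g x).intervalIntegrable
        _ _)]
    have e : Complex.exp (-((N:ℂ) * x)) * Complex.exp ((N:ℂ) * x) = 1 := by
      rw [← Complex.exp_add]; simp
    have hN' : (N : ℂ) ≠ 0 := by exact_mod_cast hN.ne'
    have : (N : ℂ) * (g x / N) = g x := by field_simp
    simp only [Complex.ofReal_zero, mul_zero, Complex.exp_zero, mul_one]
    linear_combination (Complex.exp (-((N:ℂ) * x)) * Complex.exp ((N:ℂ) * x)
      - Complex.exp (-((N:ℂ) * x))) * this + g x * e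
  have h2 : smooth N (fun y => g x - g y) x = smooth N (fun _ => g x) x - smooth N g x := by
    simp only [smooth]
    rw [← mul_sub, ← intervalIntegral.integral_sub
      ((by fun_prop : Continuous fun y : ℝ => Complex.exp ((N : ℂ) * y) * g x).intervalIntegrable
        _ _)
      ((by fun_prop : Continuous fun y : ℝ => Complex.exp ((N : ℂ) * y) * g y).intervalIntegrable
        _ _)]
    simp only [mul_sub]
  have h3 : g x - smooth N g x
      = smooth N (fun y => g x - g y) x + Complex.exp (-((N:ℂ) * x)) * g x := by
    rw [h2, h1]; ring
  have h4 := smooth_norm_le hN (f := fun y => g x - g y) (b := fun y => ε + K * |x - y|)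
    (by fun_prop) (fun y _ => h x y) hx
  have h5 : ∫ y in (0:ℝ)..x, Real.exp (N * y) * (ε + K * |x - y|)
      = (Real.exp (N * x) * (ε + K / N) - (ε + K * x + K / N)) / N := by
    have : ∫ y in (0:ℝ)..x, Real.exp (N * y) * (ε + K * |x - y|)
        = ∫ y in (0:ℝ)..x, Real.exp (N * y) * (ε + K * (x - y)) := by
      apply intervalIntegral.integral_congr
      intro y hy
      rw [uIcc_of_le hx] at hy
      simp only
      rw [abs_of_nonneg (by linarith [hy.2])]
    rw [this]
    have hD : ∀ y ∈ uIcc 0 x, HasDerivAt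
        (fun y : ℝ => Real.exp (N * y) * ((ε + K * (x - y) + K / N) / N))
        (Real.exp (N * y) * (ε + K * (x - y))) y := by
      intro y _
      have a1 := ((hasDerivAt_id y).const_mul N).exp
      have a2 : HasDerivAt (fun y : ℝ => (ε + K * (x - y) + K / N) / N) (-K / N) y := by
        have := (((((hasDerivAt_id y).const_sub x).const_mul K).const_add ε).add_const
          (K / N)).div_const N
        simpa using this
      refine (a1.mul a2).congr_deriv ?_
      simp; field_simp; ring
    rw [intervalIntegral.integral_eq_sub_of_hasDerivAt hD
      ((by fun_prop : Continuous fun y => Real.exp (N * y) * (ε + K * (x - y))).intervalIntegrable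
        _ _)]
    simp; ring
  rw [h5] at h4
  have e : Real.exp (-(N * x)) * Real.exp (N * x) = 1 := by rw [← Real.exp_add]; simp
  have h6 : N * Real.exp (-(N * x)) * ((Real.exp (N * x) * (ε + K / N) - (ε + K * x + K / N)) / N)
      = (ε + K / N) - Real.exp (-(N * x)) * (ε + K * x + K / N) := by
    field_simp
    linear_combination (ε * N + K) * e
  rw [h6] at h4
  have h7 : ‖g x‖ ≤ ε + K * x := by
    have := h x 0
    rwa [h0, sub_zero, sub_zero, abs_of_nonneg hx] at this
  have h8 : ‖Complex.exp (-((N:ℂ) * x)) * g x‖ ≤ Real.exp (-(N * x)) * (ε + K * x) := by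
    rw [norm_mul]
    have : ‖Complex.exp (-((N:ℂ) * x))‖ = Real.exp (-(N * x)) := by simp [Complex.norm_exp]
    rw [this]
    gcongr
  rw [h3]
  refine (norm_add_le _ _).trans ?_
  have : 0 ≤ Real.exp (-(N * x)) * (K / N) := by positivity
  linarith

/-- modulus of continuity -/
lemma exists_modulus {g : ℝ → ℂ} (hg : Continuous g) (h0 : ∀ x ≤ 0, g x = 0)
    (ht : Tendsto g atTop (nhds 0)) {ε : ℝ} (hε : 0 < ε) :
    ∃ K, 0 ≤ K ∧ ∀ x y, ‖g x - g y‖ ≤ ε + K * |x - y| := by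
  have hcc : Tendsto g (cocompact ℝ) (nhds 0) := by
    rw [cocompact_eq_atBot_atTop]
    refine Tendsto.sup ?_ ht
    refine tendsto_const_nhds.congr' ?_
    filter_upwards [eventually_le_atBot 0] with x hx
    exact (h0 x hx).symm
  have huc := hg.uniformContinuous_of_tendsto_cocompact hcc
  obtain ⟨M, hM⟩ : ∃ M, ∀ x, ‖g x‖ ≤ M := by
    obtain ⟨X, hX⟩ := (Metric.tendsto_atTop.1 ht) 1 one_pos
    obtain ⟨M, hM⟩ := (isCompact_Icc (a := 0) (b := X)).exists_bound_of_continuousOn hg.continuousOn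
    refine ⟨max M 1, fun x => ?_⟩
    rcases le_total x 0 with h | h
    · rw [h0 x h]; simp
    · rcases le_total X x with h' | h'
      · have := hX x h'
        rw [dist_zero_right] at this
        exact this.le.trans (le_max_right _ _)
      · exact (hM x ⟨h, h'⟩).trans (le_max_left _ _)
  have hM0 : 0 ≤ M := (norm_nonneg _).trans (hM 0)
  obtain ⟨δ, hδ, hd⟩ := Metric.uniformContinuous_iff.1 huc ε hε
  refine ⟨2 * M / δ, by positivity, fun x y => ?_⟩
  rcases lt_or_ge |x - y| δ with h | h
  · have := hd (a := x) (b := y) (by rwa [Real.dist_eq])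
    rw [dist_eq_norm] at this
    have : 0 ≤ 2 * M / δ * |x - y| := by positivity
    linarith
  · have h1 : ‖g x - g y‖ ≤ 2 * M := (norm_sub_le _ _).trans (by linarith [hM x, hM y])
    have h2 : 2 * M ≤ 2 * M / δ * |x - y| := by
      calc 2 * M = 2 * M / δ * δ := by field_simp
        _ ≤ _ := by gcongr
    linarith

lemma Rbar_norm {α r : ℝ} {s : ℂ} (hs : s ∈ Rbar α r) : ‖s‖ ≤ |α| + 1 + |r| := by
  obtain ⟨h1, h2, h3⟩ := hs
  refine (Complex.norm_le_abs_re_add_abs_im s).trans ?_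
  have : |s.re| ≤ |α| + 1 := by
    rw [abs_le]; constructor
    · linarith [neg_abs_le α]
    · linarith [abs_nonneg α]
  linarith [le_abs_self r]

lemma Rbar_compact (α r : ℝ) : IsCompact (Rbar α r) := by
  refine Metric.isCompact_of_isClosed_isBounded ?_ ?_
  · refine (isClosed_le continuous_const Complex.continuous_re).inter
      ((isClosed_le Complex.continuous_re continuous_const).inter
        (isClosed_le (continuous_abs.comp Complex.continuous_im) continuous_const))
  · exact (Metric.isBounded_closedBall (x := (0:ℂ)) (r := |α| + 1 + |r|)).subset fun s hs => by
      simpa using Rbar_norm hs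

lemma smoothing_step {α r α₁ r₁ a : ℝ} {τ τ' : ℝ → ℂ} {F : ℂ → ℂ} (ha : 0 < a)
    (h : Good α r α₁ r₁ a τ τ' F) {k : ℕ} (hk : Dec k a τ) {ε : ℝ} (hε : 0 < ε) :
    ∃ σ σ' G, Good α r α₁ r₁ a σ σ' G ∧ Dec (k + 1) a σ ∧
      (∀ x : ℝ, 0 ≤ x → ‖τ' x - σ' x‖ ≤ ε) ∧ ∀ s ∈ Rbar α r, ‖F s - G s‖ ≤ ε := by
  obtain ⟨C, hC, hb, hb'⟩ := h.hb
  have hct : Continuous τ := continuous_iff_continuousAt.2 fun x => (h.hd x).continuousAt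
  have ht : Tendsto τ' atTop (nhds 0) := by
    have h1 : Tendsto (fun x : ℝ => (-a) * x) atTop atBot :=
        tendsto_id.const_mul_atTop_of_neg (by linarith)
    have h2 : Tendsto (fun x : ℝ => C * Real.exp ((-a) * x)) atTop (nhds 0) := by
      simpa using (Real.tendsto_exp_atBot.comp h1).const_mul C
    refine squeeze_zero_norm' ?_ h2
    filter_upwards [eventually_ge_atTop 0] with x hx
    simpa using hb' x hx
  obtain ⟨K, hK, hmod⟩ := exists_modulus h.hc h.h0' ht (half_pos hε)
  obtain ⟨MF, hMF⟩ := (Rbar_compact α r).exists_bound_of_continuousOn h.hFc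
  obtain ⟨D, hD⟩ := hk
  set Ms := |α| + 1 + |r| with hMs
  have hMs0 : 0 < Ms := by positivity
  set MF' := |MF| with hMF'
  have hMF0 : 0 ≤ MF' := abs_nonneg _
  obtain ⟨N, hN1, hN2, hN3, hN4, hN5⟩ : ∃ N : ℝ, 2 * K / ε < N ∧ a < N ∧ 2 * Ms < N ∧
      2 * MF' * Ms / ε < N ∧ |α₁| < N := by
    have := (eventually_gt_atTop (2 * K / ε)).and ((eventually_gt_atTop a).and
      ((eventually_gt_atTop (2 * Ms)).and ((eventually_gt_atTop (2 * MF' * Ms / ε)).and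
      (eventually_gt_atTop |α₁|))))
    exact this.exists
  have hN : 0 < N := by linarith
  have hne : ∀ s : ℂ, -N < s.re → s + N ≠ 0 := by
    intro s hs h0
    have : (s + N).re = 0 := by rw [h0]; rfl
    simp at this; linarith
  have hnorm : ∀ s ∈ Rbar α r, N / 2 ≤ ‖s + N‖ := by
    intro s hs
    have h1 := Rbar_norm hs
    have h2 : ‖(N : ℂ)‖ ≤ ‖s + N‖ + ‖s‖ := by
      have := norm_sub_le (s + N) s
      simpa using this
    rw [Complex.norm_real, Real.norm_of_nonneg hN.le] at h2
    linarith
  have hnR : ∀ s ∈ Rbar α r, s + N ≠ 0 := by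
    intro s hs h0
    have := hnorm s hs
    rw [h0, norm_zero] at this
    linarith
  have hSd : ∀ x, HasDerivAt (smooth N τ) (smooth N τ' x) x := by
    intro x
    rw [smooth_eq N h.hd h.hc (h.h0 0 le_rfl)]
    exact smooth_deriv N hct x
  have hSc : Continuous (smooth N τ') :=
    continuous_iff_continuousAt.2 fun x => (smooth_deriv N h.hc x).continuousAt
  have hB := fun x (hx : (0:ℝ) ≤ x) => smooth_bound hN hN2 hC hb hx
  have hB' := fun x (hx : (0:ℝ) ≤ x) => smooth_bound hN hN2 hC hb' hx
  have hLS : ∀ s : ℂ, -a < s.re → Laplace (smooth N τ) s = N / (s + N) * Laplace τ s := by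
    intro s hs
    have e1 := laplace_deriv hSd hSc hB hB' hs
    rw [smooth_zero N h.h0 0 le_rfl, sub_zero] at e1
    have e2 : Laplace (smooth N τ') s = N * Laplace τ s - N * Laplace (smooth N τ) s := by
      have i1 := laplace_integrable hct.continuousOn hb hs
      have hcS : Continuous (smooth N τ) :=
        continuous_iff_continuousAt.2 fun x => (hSd x).continuousAt
      have i2 := laplace_integrable hcS.continuousOn hB hs
      rw [Laplace, Laplace, Laplace, ← integral_const_mul, ← integral_const_mul,
        ← integral_sub (i1.const_mul _) (i2.const_mul _)]
      congr 1; ext x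
      rw [smooth_eq N h.hd h.hc (h.h0 0 le_rfl)]; ring
    have h0 := hne s (by linarith)
    field_simp
    linear_combination e2 - e1
  refine ⟨smooth N τ, smooth N τ', fun s => N / (s + N) * F s, ?_, ?_, ?_, ?_⟩
  · refine ⟨hSd, hSc, smooth_zero N h.h0, smooth_zero N h.h0', ?_, ?_, ?_, ?_⟩
    · refine ⟨N * C / (N - a), ?_, hB, hB'⟩
      have : 0 < N - a := by linarith
      positivity
    · refine DifferentiableOn.mul ?_ h.hF
      intro s hs
      have : s + N ≠ 0 := hne s (by have := hs.1; linarith [neg_abs_le α₁])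
      apply DifferentiableAt.differentiableWithinAt
      fun_prop (disch := assumption)
    · refine ContinuousOn.mul ?_ h.hFc
      exact continuousOn_const.div (by fun_prop) hnR
    · intro s h1 h2 h3
      rw [hLS s h1, h.hL s h1 h2 h3]
  · refine ⟨N * D, fun w hw => ?_⟩
    rw [hLS w (by rw [hw]; linarith), norm_mul, norm_div, Complex.norm_real,
      Real.norm_of_nonneg hN.le]
    have hww : ‖w‖ ≤ ‖w + N‖ := by
      rw [Complex.norm_def, Complex.norm_def]
      apply Real.sqrt_le_sqrt
      rw [Complex.normSq_apply, Complex.normSq_apply]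
      simp
      rw [hw]
      nlinarith
    have h0 : 0 < ‖w + N‖ := norm_pos_iff.2 (hne w (by rw [hw]; linarith))
    have h1 := hD w hw
    calc ‖w‖ ^ (k + 1) * (N / ‖w + N‖ * ‖Laplace τ w‖)
        = N * (‖w‖ / ‖w + N‖) * (‖w‖ ^ k * ‖Laplace τ w‖) := by ring
      _ ≤ N * 1 * (‖w‖ ^ k * ‖Laplace τ w‖) := by
          gcongr
          exact (div_le_one h0).2 hww
      _ ≤ N * D := by rw [mul_one]; gcongr
  · intro x hx
    refine (smooth_sub_le hN (half_pos hε).le hK h.hc (h.h0' 0 le_rfl) hmod hx).trans ?_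
    have : K / N ≤ ε / 2 := by
      rw [div_le_iff₀ hN]
      rw [div_lt_iff₀ hε] at hN1
      linarith
    linarith
  · intro s hs
    have h0 := hnR s hs
    have e : F s - N / (s + N) * F s = F s * s / (s + N) := by field_simp; ring
    rw [e, norm_div, norm_mul]
    have h1 := hnorm s hs
    have h2 : ‖F s‖ ≤ MF' := (hMF s hs).trans (le_abs_self _)
    have h3 : ‖s‖ ≤ Ms := Rbar_norm hs
    rw [div_le_iff₀ (by linarith)]
    rw [div_lt_iff₀ hε] at hN4
    calc ‖F s‖ * ‖s‖ ≤ MF' * Ms := by gcongr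
      _ ≤ ε * (N / 2) := by linarith
      _ ≤ _ := by gcongr


open FourierTransform in
lemma laplace_inversion {h : ℝ → ℂ} (hc : Continuous h) (h0 : ∀ x ≤ 0, h x = 0) {C a c : ℝ}
    (hb : ∀ x : ℝ, 0 ≤ x → ‖h x‖ ≤ C * Real.exp (-(a * x))) (hca : c < a)
    (hintg : Integrable fun t : ℝ => Laplace h (-c + t * Complex.I)) (x : ℝ) :
    ∫ t : ℝ, Laplace h (-c + t * Complex.I) * Complex.exp ((-c + t * Complex.I) * x)
      = 2 * Real.pi * h x := by
  set f : ℝ → ℂ := fun x => h x * Complex.exp (c * x) with hf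
  have hfc : Continuous f := by fun_prop
  have hsupp : ∀ (φ : ℝ → ℂ), (∀ x ≤ 0, φ x = 0) → ∫ x, φ x = ∫ x in Ioi (0:ℝ), φ x := by
    intro φ hφ
    rw [setIntegral_eq_integral_of_forall_compl_eq_zero]
    intro x hx
    exact hφ x (not_lt.1 hx)
  have hfi : Integrable f := by
    have : IntegrableOn f (Ioi 0) := by
      have := laplace_integrable hc.continuousOn hb (s := -c) (by simpa using hca)
      simpa using this
    rw [← integrableOn_iff_integrable_of_support_subset (s := Ioi (0:ℝ))]
    · exact this
    · intro x hx
      by_contra h1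
      exact hx (by simp [hf, h0 x (not_lt.1 h1)])
  have hF : ∀ ξ : ℝ, 𝓕 f ξ = Laplace h (-c + ((2 * Real.pi * ξ : ℝ) : ℂ) * Complex.I) := by
    intro ξ
    rw [Real.fourier_real_eq_integral_exp_smul, hsupp _ (by intro x hx; simp [hf, h0 x hx]),
      Laplace]
    congr 1; ext y
    simp only [hf, smul_eq_mul]
    rw [mul_left_comm, ← Complex.exp_add]
    congr 2; push_cast; ring
  have hFi : Integrable (𝓕 f) := by
    have : (𝓕 f) = fun ξ : ℝ => Laplace h (-c + ((2 * Real.pi * ξ : ℝ) : ℂ) * Complex.I) := by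
      ext ξ; exact hF ξ
    rw [this]
    exact hintg.comp_mul_left' (by positivity : 2 * Real.pi ≠ 0)
  have := hfi.fourierInv_fourier_eq hFi hfc.continuousAt (v := x)
  rw [Real.fourierInv_eq'] at this
  have e : ∀ ξ : ℝ, Complex.exp (↑(2 * Real.pi * inner ℝ ξ x) * Complex.I) • 𝓕 f ξ =
      (fun t : ℝ => Laplace h (-c + t * Complex.I) * Complex.exp ((t * Complex.I) * x))
        (2 * Real.pi * ξ) := by
    intro ξ
    simp only [hF, smul_eq_mul]
    rw [mul_comm]
    congr 2
    simp; ring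
  rw [integral_congr_ae (Eventually.of_forall e), Measure.integral_comp_mul_left
    (fun t : ℝ => Laplace h (-c + t * Complex.I) * Complex.exp ((t * Complex.I) * x))
    (2 * Real.pi)] at this
  have e2 : ∀ t : ℝ, Laplace h (-c + t * Complex.I) * Complex.exp ((-c + t * Complex.I) * x)
      = Complex.exp (-c * x) *
        (Laplace h (-c + t * Complex.I) * Complex.exp ((t * Complex.I) * x)) := by
    intro t
    rw [add_mul, Complex.exp_add]; ring
  simp_rw [e2]
  rw [integral_const_mul]
  have e3 : Complex.exp (-c * x) * Complex.exp (c * x) = 1 := by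
    rw [← Complex.exp_add]; simp
  have hpi : (0:ℝ) < (2 * Real.pi) := by positivity
  rw [abs_of_pos (by positivity), Complex.real_smul, hf] at this
  have hpi' : ((2 * Real.pi : ℝ) : ℂ) ≠ 0 := by exact_mod_cast hpi.ne'
  have t2 : (∫ t : ℝ, Laplace h (-c + t * Complex.I) * Complex.exp ((t * Complex.I) * x))
      = ((2 * Real.pi : ℝ) : ℂ) * (h x * Complex.exp (c * x)) := by
    beta_reduce at this
    rw [← this, Complex.ofReal_inv, mul_inv_cancel_left₀ hpi']
  rw [t2]; push_cast
  linear_combination (2 * Real.pi * h x : ℂ) * e3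

/-! ### The Banach space -/

instance Rbar_compactSpace (α r : ℝ) : CompactSpace (Rbar α r) :=
  isCompact_iff_compactSpace.1 (Rbar_compact α r)

/-- Values at zero, derivative, transform. -/
abbrev BB (α r : ℝ) := ℂ × (BoundedContinuousFunction (Ici (0:ℝ)) ℂ) × C(Rbar α r, ℂ)

lemma norm_exp_mul (w : ℂ) (x : ℝ) : ‖Complex.exp (w * x)‖ = Real.exp (w.re * x) := by
  simp [Complex.norm_exp]

open Classical in
/-- The exponential as a bounded continuous function. -/
noncomputable def eC (w : ℂ) : BoundedContinuousFunction (Ici (0:ℝ)) ℂ :=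
  if h : w.re < 0 then
    BoundedContinuousFunction.ofNormedAddCommGroup (fun x : Ici (0:ℝ) => Complex.exp (w * (x : ℝ)))
      (by fun_prop) 1 (by
        intro x
        rw [norm_exp_mul]
        exact Real.exp_le_one_iff.2 (mul_nonpos_of_nonpos_of_nonneg h.le x.2))
  else 0

lemma eC_apply {w : ℂ} (h : w.re < 0) (x : Ici (0:ℝ)) : eC w x = Complex.exp (w * (x : ℝ)) := by
  simp [eC, h]

lemma eC_norm (w : ℂ) : ‖eC w‖ ≤ 1 := by
  by_cases h : w.re < 0
  · rw [BoundedContinuousFunction.norm_le zero_le_one]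
    intro x
    rw [eC_apply h, norm_exp_mul]
    exact Real.exp_le_one_iff.2 (mul_nonpos_of_nonpos_of_nonneg h.le x.2)
  · simp [eC, h]

lemma eC_differentiableAt {w : ℂ} (h : w.re < 0) : DifferentiableAt ℂ eC w := by
  set c := -w.re with hc
  have hc0 : 0 < c := by linarith
  have hbd : ∀ x : Ici (0:ℝ), ‖((x : ℝ) : ℂ) * Complex.exp (w * (x : ℝ))‖ ≤ 1 / c := by
    intro x
    rw [norm_mul, norm_exp_mul, Complex.norm_real, Real.norm_of_nonneg x.2]
    have h1 : c * (x : ℝ) ≤ Real.exp (c * x) := by linarith [Real.add_one_le_exp (c * (x:ℝ))]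
    have h2 : Real.exp (w.re * x) * Real.exp (c * x) = 1 := by
      rw [← Real.exp_add, hc]; simp
    rw [le_div_iff₀ hc0]
    calc (x : ℝ) * Real.exp (w.re * x) * c = Real.exp (w.re * x) * (c * x) := by ring
      _ ≤ Real.exp (w.re * x) * Real.exp (c * x) := by gcongr
      _ = 1 := h2
  set D : BoundedContinuousFunction (Ici (0:ℝ)) ℂ :=
    BoundedContinuousFunction.ofNormedAddCommGroup
      (fun x : Ici (0:ℝ) => ((x : ℝ) : ℂ) * Complex.exp (w * (x : ℝ))) (by fun_prop) (1 / c) hbd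
    with hD
  have : HasDerivAt eC D w := by
    rw [hasDerivAt_iff_isLittleO]
    refine Asymptotics.IsBigO.trans_isLittleO ?_ (Asymptotics.isLittleO_pow_sub_sub w one_lt_two)
    refine Asymptotics.IsBigO.of_bound (8 / c ^ 2) ?_
    filter_upwards [Metric.ball_mem_nhds w (half_pos hc0)] with v hv
    rw [Metric.mem_ball, dist_eq_norm] at hv
    set k := v - w with hk
    have hvre : v.re < 0 := by
      have h1 : k.re ≤ ‖k‖ := Complex.re_le_norm k
      rw [hk, Complex.sub_re] at h1
      rw [hk] at hv
      linarith
    rw [BoundedContinuousFunction.norm_le (by positivity)]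
    intro x
    have hx : (0:ℝ) ≤ x := x.2
    have e : (eC v - eC w - k • D) x
        = Complex.exp (w * (x : ℝ)) * (Complex.exp (k * (x:ℝ)) - 1 - k * (x:ℝ)) := by
      simp only [BoundedContinuousFunction.coe_sub, BoundedContinuousFunction.coe_smul,
        Pi.sub_apply, eC_apply h, eC_apply hvre, hD,
        BoundedContinuousFunction.coe_ofNormedAddCommGroup, smul_eq_mul]
      have : Complex.exp (v * (x:ℝ)) = Complex.exp (w * (x:ℝ)) * Complex.exp (k * (x:ℝ)) := by
        rw [← Complex.exp_add, hk]; ring_nf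
      rw [this]; ring
    rw [e, norm_mul, norm_exp_mul, norm_pow, norm_norm]
    have h2 : ‖Complex.exp (k * (x:ℝ)) - 1 - k * (x:ℝ)‖
        ≤ ‖k * ((x:ℝ):ℂ)‖ ^ 2 * Real.exp ‖k * ((x:ℝ):ℂ)‖ := by
      have := Complex.norm_exp_sub_sum_le_norm_mul_exp (k * ((x:ℝ):ℂ)) 2
      simpa [Finset.sum_range_succ, sub_sub] using this
    have h3 : ‖k * ((x:ℝ):ℂ)‖ = ‖k‖ * x := by
      rw [norm_mul, Complex.norm_real, Real.norm_of_nonneg hx]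
    rw [h3] at h2
    have h4 : (c / 2 * x) ^ 2 ≤ 2 * Real.exp (c / 2 * x) := by
      have h0 : 0 ≤ c / 2 * (x:ℝ) := by positivity
      have := Real.quadratic_le_exp_of_nonneg h0
      linarith
    have h5 : (x:ℝ) ^ 2 ≤ 8 / c ^ 2 * Real.exp (c / 2 * x) := by
      rw [div_mul_eq_mul_div, le_div_iff₀ (by positivity)]
      nlinarith
    calc Real.exp (w.re * x) * ‖Complex.exp (k * (x:ℝ)) - 1 - k * (x:ℝ)‖
        ≤ Real.exp (w.re * x) * ((‖k‖ * x) ^ 2 * Real.exp (‖k‖ * x)) := by gcongr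
      _ ≤ Real.exp (w.re * x) * ((‖k‖ * x) ^ 2 * Real.exp (c / 2 * x)) := by gcongr
      _ = Real.exp (w.re * x) * Real.exp (c / 2 * x) * ‖k‖ ^ 2 * (x:ℝ) ^ 2 := by ring
      _ ≤ Real.exp (w.re * x) * Real.exp (c / 2 * x) * ‖k‖ ^ 2 *
          (8 / c ^ 2 * Real.exp (c / 2 * x)) := by gcongr
      _ = (Real.exp (w.re * x) * Real.exp (c / 2 * x) * Real.exp (c / 2 * x)) *
          (8 / c ^ 2 * ‖k‖ ^ 2) := by ring
      _ = 8 / c ^ 2 * ‖k‖ ^ 2 := by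
          rw [← Real.exp_add, ← Real.exp_add, hc]
          ring_nf; simp
  exact this.differentiableAt

/-- The resolvent. -/
noncomputable def eR (α r : ℝ) (w : ℂ) : C(Rbar α r, ℂ) :=
  Ring.inverse ((⟨Subtype.val, continuous_subtype_val⟩ : C(Rbar α r, ℂ)) -
    algebraMap ℂ C(Rbar α r, ℂ) w)

lemma eR_isUnit {α r : ℝ} {w : ℂ} (hw : w ∉ Rbar α r) :
    IsUnit ((⟨Subtype.val, continuous_subtype_val⟩ : C(Rbar α r, ℂ)) -
    algebraMap ℂ C(Rbar α r, ℂ) w) := by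
  rw [ContinuousMap.isUnit_iff_forall_ne_zero]
  intro s h0
  apply hw
  have : (s : ℂ) - w = 0 := by simpa using h0
  rw [sub_eq_zero] at this
  rw [← this]; exact s.2

lemma eR_apply {α r : ℝ} {w : ℂ} (hw : w ∉ Rbar α r) (s : Rbar α r) :
    eR α r w s = 1 / ((s : ℂ) - w) := by
  have hu := eR_isUnit hw
  have h1 := Ring.inverse_mul_cancel _ hu
  have h2 : eR α r w s * ((s : ℂ) - w) = 1 := by
    have := congrArg (fun f : C(Rbar α r, ℂ) => f s) h1
    simpa [eR] using this
  have h3 : (s : ℂ) - w ≠ 0 := by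
    intro h; rw [h, mul_zero] at h2; exact zero_ne_one h2
  rw [eq_div_iff h3, h2]

lemma eR_differentiableAt {α r : ℝ} {w : ℂ} (hw : w ∉ Rbar α r) :
    DifferentiableAt ℂ (eR α r) w := by
  have h1 : DifferentiableAt ℂ (fun w => (⟨Subtype.val, continuous_subtype_val⟩ : C(Rbar α r, ℂ)) -
    algebraMap ℂ C(Rbar α r, ℂ) w) w := by
    have : DifferentiableAt ℂ (fun w => algebraMap ℂ C(Rbar α r, ℂ) w) w := by
      exact (Algebra.linearMap ℂ C(Rbar α r, ℂ)).toContinuousLinearMap.differentiableAt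
    exact this.const_sub _
  exact h1.inverse (eR_isUnit hw)

/-- The element of `BB` attached to the exponential `e^{wx}`. -/
noncomputable def ee (α r : ℝ) (w : ℂ) : BB α r := (1, w • eC w, eR α r w)

lemma ee_differentiableAt {α r : ℝ} {w : ℂ} (h : w.re < 0) (hw : w ∉ Rbar α r) :
    DifferentiableAt ℂ (ee α r) w :=
  (differentiableAt_const _).prodMk
    ((differentiableAt_id.smul (eC_differentiableAt h)).prodMk (eR_differentiableAt hw))

lemma ee_norm {α r d : ℝ} {w : ℂ} (hd : 0 < d) (hw : w ∉ Rbar α r)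
    (hdist : ∀ s ∈ Rbar α r, d ≤ ‖s - w‖) : ‖ee α r w‖ ≤ 1 + ‖w‖ + 1 / d := by
  have h1 : ‖w • eC w‖ ≤ ‖w‖ := by
    rw [norm_smul]
    calc _ ≤ ‖w‖ * 1 := by gcongr; exact eC_norm w
      _ = _ := mul_one _
  have h2 : ‖eR α r w‖ ≤ 1 / d := by
    rw [ContinuousMap.norm_le _ (by positivity)]
    intro s
    rw [eR_apply hw, norm_div, norm_one]
    exact one_div_le_one_div_of_le hd (hdist s s.2)
  have hd' : 0 < 1 / d := by positivity
  rw [ee, Prod.norm_mk, Prod.norm_mk, norm_one]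
  refine max_le ?_ (max_le ?_ ?_) <;> linarith [norm_nonneg w]

/-- Closed span of exponentials. -/
noncomputable def EE (β α r : ℝ) : Submodule ℂ (BB α r) :=
  (Submodule.span ℂ (Set.image (ee α r) {w : ℂ | w.re < β})).topologicalClosure

lemma EE_closed (β α r : ℝ) : IsClosed (EE β α r : Set (BB α r)) :=
  Submodule.isClosed_topologicalClosure _

lemma ee_mem_of_convex {β α r : ℝ} {U : Set ℂ} (hUo : IsOpen U)
    (hU : Convex ℝ U) (h1 : ∀ w ∈ U, w.re < 0 ∧ w ∉ Rbar α r) {w₀ : ℂ} (hw₀ : w₀ ∈ U)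
    (hw₀β : w₀.re < β) : ∀ w ∈ U, ee α r w ∈ EE β α r := by
  have : IsClosed (EE β α r : Set (BB α r)) := EE_closed β α r
  set q := (EE β α r).mkQL with hq
  have hd : DifferentiableOn ℂ (fun w => q (ee α r w)) U := by
    intro w hw
    exact (q.differentiableAt.comp w
      (ee_differentiableAt (h1 w hw).1 (h1 w hw).2)).differentiableWithinAt
  have han := hd.analyticOnNhd hUo
  have hz : (fun w => q (ee α r w)) =ᶠ[nhds w₀] 0 := by
    have : {w : ℂ | w.re < β} ∈ nhds w₀ :=
      (isOpen_lt Complex.continuous_re continuous_const).mem_nhds hw₀β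
    filter_upwards [this] with w hw
    have : ee α r w ∈ EE β α r := Submodule.le_topologicalClosure _
      (Submodule.subset_span ⟨w, hw, rfl⟩)
    simpa [hq] using this
  have := han.eqOn_zero_of_preconnected_of_eventuallyEq_zero hU.isPreconnected hw₀ hz
  intro w hw
  have h2 := this hw
  simpa [hq] using h2

lemma ee_mem {β α r : ℝ} (hβ : β < 0) (hα : α < 0) {w : ℂ} (h : w.re < 0)
    (hw : w ∉ Rbar α r) : ee α r w ∈ EE β α r := by
  have hcases : w.re < α ∨ r < w.im ∨ w.im < -r := by
    by_contra hcon
    push Not at hcon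
    exact hw ⟨hcon.1, by linarith, abs_le.2 ⟨by linarith, hcon.2.1⟩⟩
  rcases hcases with h1 | h1 | h1
  · refine ee_mem_of_convex (U := {w : ℂ | w.re < α})
      (isOpen_lt Complex.continuous_re continuous_const) (convex_halfSpace_re_lt α)
      (fun w hw => ⟨lt_trans hw hα, fun h => not_le.2 hw h.1⟩)
      (w₀ := ((min α β - 1 : ℝ) : ℂ)) ?_ ?_ w h1
    · simp only [mem_ofPred_eq, Complex.ofReal_re]; linarith [min_le_left α β]
    · simp only [Complex.ofReal_re]; linarith [min_le_right α β]
  · refine ee_mem_of_convex (U := {w : ℂ | w.re < 0} ∩ {w : ℂ | r < w.im})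
      ((isOpen_lt Complex.continuous_re continuous_const).inter
        (isOpen_lt continuous_const Complex.continuous_im))
      ((convex_halfSpace_re_lt 0).inter (convex_halfSpace_im_gt r))
      (fun w hw => ⟨hw.1, fun h => absurd (le_trans (le_abs_self _) h.2.2) (not_le.2 hw.2)⟩)
      (w₀ := ⟨β - 1, r + 1⟩) ?_ ?_ w ⟨h, h1⟩
    · constructor <;> simp; linarith
    · simp
  · refine ee_mem_of_convex (U := {w : ℂ | w.re < 0} ∩ {w : ℂ | w.im < -r})
      ((isOpen_lt Complex.continuous_re continuous_const).inter
        (isOpen_lt Complex.continuous_im continuous_const))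
      ((convex_halfSpace_re_lt 0).inter (convex_halfSpace_im_lt (-r)))
      (fun w hw => ⟨hw.1, fun h => by
        have h2 : w.im < -r := hw.2
        have := (abs_le.1 h.2.2).1; linarith⟩)
      (w₀ := ⟨β - 1, -r - 1⟩) ?_ ?_ w ⟨h, h1⟩
    · constructor <;> simp; linarith
    · simp

lemma EE_integral_mem {β α r : ℝ} {X : Type*} [MeasurableSpace X] {μ : Measure X}
    {f : X → BB α r} (hi : Integrable f μ) (hf : ∀ᵐ x ∂μ, f x ∈ EE β α r) :
    ∫ x, f x ∂μ ∈ EE β α r := by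
  have : IsClosed (EE β α r : Set (BB α r)) := EE_closed β α r
  have h1 := (EE β α r).mkQL.integral_comp_comm hi
  have h2 : ∫ x, (EE β α r).mkQL (f x) ∂μ = 0 := by
    refine integral_eq_zero_of_ae ?_
    filter_upwards [hf] with x hx
    simpa using hx
  rw [h2] at h1
  simpa using h1.symm


lemma span_to_exp {β α r : ℝ} (hβ : β < α) (hα : α < 0) {b : BB α r}
    (hb : b ∈ Submodule.span ℂ (Set.image (ee α r) {w : ℂ | w.re < β})) :
    ∃ p ∈ ExpS β, b.1 = p.1 0 ∧ (∀ x : Ici (0:ℝ), b.2.1 x = p.2.1 x) ∧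
      ∀ s : Rbar α r, b.2.2 s = p.2.2 s := by
  induction hb using Submodule.span_induction with
  | mem b hb =>
    obtain ⟨w, hw, rfl⟩ := hb
    have hw : w.re < β := hw
    refine ⟨expTriple w, expTriple_mem hw, by simp [ee, expTriple], fun x => ?_, fun s => ?_⟩
    · simp [ee, expTriple, eC_apply (show w.re < 0 by linarith)]
    · have : w ∉ Rbar α r := fun h => by have := h.1; linarith
      simp only [ee, expTriple]
      exact eR_apply this s
  | zero => exact ⟨0, Submodule.zero_mem _, by simp, by simp, by simp⟩
  | add b b' _ _ h1 h2 =>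
    obtain ⟨p, hp, a1, a2, a3⟩ := h1
    obtain ⟨p', hp', a1', a2', a3'⟩ := h2
    exact ⟨p + p', Submodule.add_mem _ hp hp', by simp [a1, a1'],
      fun x => by simp [a2, a2'], fun x => by simp [a3, a3']⟩
  | smul k b _ h1 =>
    obtain ⟨p, hp, a1, a2, a3⟩ := h1
    exact ⟨k • p, Submodule.smul_mem _ k hp, by simp [a1],
      fun x => by simp [a2], fun x => by simp [a3]⟩

lemma Ropen_eq (α r : ℝ) : Ropen α r = Ioo α 1 ×ℂ Ioo (-r) r := by
  ext s
  simp [Ropen, Complex.mem_reProdIm, abs_lt, and_assoc]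

lemma Rbar_eq (α r : ℝ) : Rbar α r = Icc α 1 ×ℂ Icc (-r) r := by
  ext s
  simp [Rbar, Complex.mem_reProdIm, abs_le, and_assoc]

lemma Ropen_isOpen (α r : ℝ) : IsOpen (Ropen α r) := by
  rw [Ropen_eq]; exact isOpen_Ioo.reProdIm isOpen_Ioo

lemma Ropen_preconnected (α r : ℝ) : IsPreconnected (Ropen α r) := by
  rw [Ropen_eq]; exact ((Convex.linear_preimage (convex_Ioo α 1) Complex.reLm).inter
    (Convex.linear_preimage (convex_Ioo (-r) r) Complex.imLm)).isPreconnected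

lemma Ropen_closure {α r : ℝ} (hα : α < 1) (hr : 0 < r) : closure (Ropen α r) = Rbar α r := by
  rw [Ropen_eq, Rbar_eq, Complex.closure_reProdIm, closure_Ioo hα.ne, closure_Ioo (by linarith)]

lemma Ropen_subset (α r : ℝ) : Ropen α r ⊆ Rbar α r :=
  fun _ h => ⟨h.1.le, h.2.1.le, h.2.2.le⟩

lemma close_of_mem {β α r α₁ r₁ a : ℝ} {τ τ' : ℝ → ℂ} {F : ℂ → ℂ} (hβ : β < α) (hα : α < 0)
    (hr : 0 < r) (ha : 0 < a) (hα₁ : α₁ < α) (hr₁ : r < r₁)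
    (h : Good α r α₁ r₁ a τ τ' F) {X : BB α r} (hX : X ∈ EE β α r)
    (hX1 : X.1 = 0) (hX2 : ∀ x : Ici (0:ℝ), X.2.1 x = τ' x) : Close β α r τ' F := by
  classical
  set H : ℂ → ℂ := fun s => if hs : s ∈ Rbar α r then X.2.2 ⟨s, hs⟩ else 0 with hH
  have key : ∀ δ > 0, ∃ p ∈ ExpS β, ‖p.1 0‖ ≤ δ ∧ (∀ x : ℝ, 0 ≤ x → ‖τ' x - p.2.1 x‖ ≤ δ) ∧
      ∀ s ∈ Rbar α r, ‖H s - p.2.2 s‖ ≤ δ := by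
    intro δ hδ
    have hX' : X ∈ closure (Submodule.span ℂ (Set.image (ee α r) {w : ℂ | w.re < β}) : Set (BB α r)) := hX
    obtain ⟨b, hb, hXb⟩ := Metric.mem_closure_iff.1 hX' δ hδ
    obtain ⟨p, hp, a1, a2, a3⟩ := span_to_exp hβ hα hb
    rw [dist_eq_norm] at hXb
    have n1 : ‖(X - b).1‖ ≤ δ := (norm_fst_le _).trans hXb.le
    have n2 : ‖(X - b).2.1‖ ≤ δ := (norm_fst_le _).trans ((norm_snd_le _).trans hXb.le)
    have n3 : ‖(X - b).2.2‖ ≤ δ := (norm_snd_le _).trans ((norm_snd_le _).trans hXb.le)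
    refine ⟨p, hp, ?_, fun x hx => ?_, fun s hs => ?_⟩
    · rw [← a1]
      simpa [hX1] using n1
    · have := (X - b).2.1.norm_coe_le_norm ⟨x, hx⟩
      have e : (X - b).2.1 ⟨x, hx⟩ = τ' x - p.2.1 x := by
        have e1 := hX2 ⟨x, hx⟩
        have e2 := a2 ⟨x, hx⟩
        simp only [Prod.snd_sub, Prod.fst_sub, BoundedContinuousFunction.coe_sub, Pi.sub_apply,
          e1, e2]
      rw [e] at this
      exact this.trans n2
    · have := (X - b).2.2.norm_coe_le_norm ⟨s, hs⟩
      have e : (X - b).2.2 ⟨s, hs⟩ = H s - p.2.2 s := by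
        have e2 := a3 ⟨s, hs⟩
        simp only [Prod.snd_sub, ContinuousMap.coe_sub, Pi.sub_apply, e2, hH, hs, dif_pos]
      rw [e] at this
      exact this.trans n3
  have hβ0 : β < 0 := by linarith
  obtain ⟨C, hC, hb, hb'⟩ := h.hb
  -- equality on the right part
  have heq1 : ∀ s ∈ Rbar α r, 0 < s.re → H s = F s := by
    intro s hs hs0
    have hsa : -a < s.re := by linarith
    have e1 := laplace_deriv h.hd h.hc hb hb' hsa
    rw [h.h0 0 le_rfl, sub_zero, ← h.hL s hsa hs.2.1 (lt_of_le_of_lt hs.2.2 hr₁)] at e1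
    have i1 := laplace_integrable h.hc.continuousOn hb' hsa
    have hbound : ∀ δ > 0, ‖s * (H s - F s)‖ ≤ (‖s‖ + 1 + 1 / s.re) * δ := by
      intro δ hδ
      obtain ⟨p, hp, k1, k2, k3⟩ := key δ hδ
      have P := expProps hβ0 hp
      have e2 := P.hL' s hs0
      have e3 : Laplace τ' s - Laplace p.2.1 s = Laplace (fun x => τ' x - p.2.1 x) s := by
        rw [Laplace, Laplace, Laplace, ← integral_sub i1 (P.hi' s hs0)]
        congr 1; ext x; ring
      have n3 : ‖Laplace (fun x => τ' x - p.2.1 x) s‖ ≤ δ / (0 + s.re) :=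
        laplace_norm_le (a := 0) (by intro x hx; simpa using k2 x hx) (by simpa using hs0)
      have e4 : s * (H s - F s) = s * (H s - p.2.2 s) + (p.1 0
          - Laplace (fun x => τ' x - p.2.1 x) s) := by
        rw [← e3, e1]; linear_combination e2
      rw [e4]
      calc _ ≤ ‖s * (H s - p.2.2 s)‖ + (‖p.1 0‖ + ‖Laplace (fun x => τ' x - p.2.1 x) s‖) :=
            (norm_add_le _ _).trans (by gcongr; exact norm_sub_le _ _)
        _ ≤ ‖s‖ * δ + (δ + δ / (0 + s.re)) := by
            rw [norm_mul]; gcongr; exact k3 s hs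
        _ = _ := by rw [zero_add]; ring
    have hz : s * (H s - F s) = 0 := by
      rw [← norm_le_zero_iff]
      refine le_of_forall_pos_le_add fun η hη => ?_
      have hK : 0 < ‖s‖ + 1 + 1 / s.re := by positivity
      have := hbound (η / (‖s‖ + 1 + 1 / s.re)) (by positivity)
      rw [mul_div_cancel₀ _ hK.ne'] at this
      linarith
    have hs1 : s ≠ 0 := by rintro rfl; simp at hs0
    rcases mul_eq_zero.1 hz with h1 | h1
    · exact absurd h1 hs1
    · exact sub_eq_zero.1 h1
  have hHd : DifferentiableOn ℂ H (Ropen α r) := by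
    choose! p hp k1 k2 k3 using key
    have hT : TendstoUniformlyOn (fun (n : ℕ) => (p (1 / ((n:ℝ) + 1))).2.2) H atTop
        (Ropen α r) := by
      rw [Metric.tendstoUniformlyOn_iff]
      intro η hη
      filter_upwards [(tendsto_one_div_add_atTop_nhds_zero_nat (𝕜 := ℝ)).eventually_lt_const hη]
        with n hn s hs
      rw [dist_eq_norm]
      exact lt_of_le_of_lt (k3 _ (by positivity) s (Ropen_subset _ _ hs)) hn
    refine hT.tendstoLocallyUniformlyOn.differentiableOn (Eventually.of_forall fun n => ?_)
      (Ropen_isOpen _ _)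
    refine (expProps hβ0 (hp _ (by positivity))).hG.mono fun s hs => ?_
    exact lt_trans hβ hs.1
  have hFd : DifferentiableOn ℂ F (Ropen α r) := h.hF.mono fun s hs =>
    ⟨by linarith [hs.1], hs.2.1, by linarith [hs.2.2]⟩
  have heq2 : EqOn H F (Ropen α r) := by
    have hw : ((1 / 2 : ℝ) : ℂ) ∈ Ropen α r := by
      refine ⟨?_, ?_, ?_⟩
      · simp only [Complex.ofReal_re]; linarith
      · simp only [Complex.ofReal_re]; norm_num
      · simpa only [Complex.ofReal_im, abs_zero] using hr
    refine (hHd.analyticOnNhd (Ropen_isOpen _ _)).eqOn_of_preconnected_of_eventuallyEq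
      (hFd.analyticOnNhd (Ropen_isOpen _ _)) (Ropen_preconnected _ _) hw ?_
    have h1 : {s : ℂ | 0 < s.re} ∈ nhds ((1 / 2 : ℝ) : ℂ) :=
      (isOpen_lt continuous_const Complex.continuous_re).mem_nhds (by
        simp only [mem_ofPred_eq, Complex.ofReal_re]; norm_num)
    filter_upwards [h1, (Ropen_isOpen α r).mem_nhds hw] with s hs hs'
    exact heq1 s (Ropen_subset _ _ hs') hs
  have hHc : ContinuousOn H (Rbar α r) := by
    rw [continuousOn_iff_continuous_domRestrict]
    convert X.2.2.continuous using 1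
    ext s
    simp [hH]
  have heq3 : EqOn H F (Rbar α r) := by
    refine heq2.of_subset_closure hHc h.hFc (Ropen_subset _ _) ?_
    rw [Ropen_closure (by linarith) hr]
  intro ε hε
  obtain ⟨p, hp, -, k2, k3⟩ := key ε hε
  refine ⟨p, hp, k2, fun s hs => ?_⟩
  rw [← heq3 hs]; exact k3 s hs


lemma laplace_line_continuous {f : ℝ → ℂ} (hf : Continuous f) {C a c : ℝ}
    (hb : ∀ x : ℝ, 0 ≤ x → ‖f x‖ ≤ C * Real.exp (-(a * x))) (hca : c < a) :
    Continuous fun t : ℝ => Laplace f (-c + t * Complex.I) := by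
  unfold Laplace
  have hi : IntegrableOn (fun x : ℝ => C * Real.exp ((-(a - c)) * x)) (Ioi 0) :=
    (integrableOn_exp_mul_Ioi (by linarith) 0).const_mul C
  refine continuous_of_dominated (bound := fun x : ℝ => C * Real.exp ((-(a - c)) * x)) ?_ ?_ hi ?_
  · intro t
    exact Continuous.aestronglyMeasurable (by fun_prop)
  · intro t
    refine (ae_restrict_iff' measurableSet_Ioi).2 (Eventually.of_forall fun x hx => ?_)
    rw [norm_mul, norm_exp_neg_mul]
    have hx : (0:ℝ) < x := hx
    calc _ ≤ C * Real.exp (-(a * x)) * Real.exp (-((-(c:ℂ) + t * Complex.I).re * x)) := by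
          gcongr; exact hb x hx.le
      _ = _ := by
          rw [mul_assoc, ← Real.exp_add]; simp; ring_nf; simp
  · exact Eventually.of_forall fun x => by fun_prop

lemma ray_integrable {τ : ℝ → ℂ} {a d : ℝ} (ha : 0 < a) (hd : 0 < d) (hk : Dec 3 a τ)
    (hLc : Continuous fun t : ℝ => Laplace τ (-((a / 2 : ℝ) : ℂ) + t * Complex.I))
    {E : Type*} [NormedAddCommGroup E] [NormedSpace ℂ E] {g : ℝ → E} {S : Set ℝ}
    (hS : MeasurableSet S)
    (hg : AEStronglyMeasurable g (volume.restrict S))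
    (hgb : ∀ t ∈ S, ‖g t‖ ≤ 1 + ‖-((a / 2 : ℝ) : ℂ) + t * Complex.I‖ + 1 / d) :
    IntegrableOn (fun t : ℝ => Laplace τ (-((a / 2 : ℝ) : ℂ) + t * Complex.I) • g t) S := by
  obtain ⟨C, hC⟩ := hk
  set c := a / 2 with hc
  have hc0 : 0 < c := by positivity
  set M := 1 + (1 + 1 / d) / c with hM
  have hM0 : 0 < M := by positivity
  have hi : IntegrableOn (fun t : ℝ => ((1 + 1 / c ^ 2) * M * C) * (1 + t ^ 2)⁻¹) S :=
    (integrable_inv_one_add_sq.const_mul _).integrableOn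
  refine Integrable.mono' hi (hLc.aestronglyMeasurable.smul hg) ?_
  refine (ae_restrict_iff' hS).2 (Eventually.of_forall fun t ht => ?_)
  have h1 := hgb t ht
  have h2 := hC (-(c : ℂ) + t * Complex.I) (by simp)
  set w : ℂ := -(c : ℂ) + t * Complex.I with hw
  have hw2 : ‖w‖ ^ 2 = c ^ 2 + t ^ 2 := by
    rw [← Complex.normSq_eq_norm_sq, Complex.normSq_apply]; simp [hw]; ring
  have hwc : c ≤ ‖w‖ := by
    refine le_of_sq_le_sq ?_ (norm_nonneg _)
    rw [hw2]; nlinarith [sq_nonneg t]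
  have h3 : 1 + ‖w‖ + 1 / d ≤ M * ‖w‖ := by
    have : (1 + 1 / d) ≤ (1 + 1 / d) / c * ‖w‖ := by
      rw [div_mul_eq_mul_div, le_div_iff₀ hc0]; gcongr
    rw [hM, add_mul, one_mul]; linarith
  have h4 : 1 + t ^ 2 ≤ (1 + 1 / c ^ 2) * ‖w‖ ^ 2 := by
    have : (1:ℝ) ≤ 1 / c ^ 2 * ‖w‖ ^ 2 := by
      rw [div_mul_eq_mul_div, le_div_iff₀ (by positivity), hw2]; nlinarith [sq_nonneg t]
    rw [add_mul, one_mul]; nlinarith [sq_nonneg c]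
  rw [norm_smul, ← div_eq_mul_inv, le_div_iff₀ (by positivity)]
  calc ‖Laplace τ w‖ * ‖g t‖ * (1 + t ^ 2)
      ≤ ‖Laplace τ w‖ * (M * ‖w‖) * ((1 + 1 / c ^ 2) * ‖w‖ ^ 2) := by
        gcongr; exact h1.trans h3
    _ = (1 + 1 / c ^ 2) * M * (‖w‖ ^ 3 * ‖Laplace τ w‖) := by ring
    _ ≤ _ := by gcongr

lemma contour {α r α₁ r₁ a β : ℝ} {τ τ' : ℝ → ℂ} {F : ℂ → ℂ} (hβ : β < α) (hα : α < 0)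
    (hr : 0 < r) (ha : 0 < a) (haα : a < -α) (hα₁ : α₁ < α) (hr₁ : r < r₁)
    (h : Good α r α₁ r₁ a τ τ' F) (hk : Dec 3 a τ) :
    ∃ X ∈ EE β α r, ∀ (V : BB α r →L[ℂ] ℂ) (g : ℂ → ℂ), Differentiable ℂ g →
      (∀ w : ℂ, w.re < 0 → V (ee α r w) = g w) →
      (∀ w : ℂ, w.re < 0 → ‖g w‖ ≤ 1 + ‖w‖) →
      V X = ∫ t : ℝ, Laplace τ (-((a / 2 : ℝ) : ℂ) + t * Complex.I)
        * g (-((a / 2 : ℝ) : ℂ) + t * Complex.I) := by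
  obtain ⟨C, hC, hb, hb'⟩ := h.hb
  have hct : Continuous τ := continuous_iff_continuousAt.2 fun x => (h.hd x).continuousAt
  have hLc := laplace_line_continuous hct hb (c := a / 2) (by linarith)
  set c := a / 2 with hc
  have hc0 : 0 < c := by positivity
  obtain ⟨ρ, hρ1, hρ2⟩ := exists_between hr₁
  obtain ⟨A, hA1, hA2⟩ := exists_between hα₁
  have hAc : A ≤ -c := by linarith
  have hβ0 : β < 0 := by linarith
  have hρ0 : 0 < ρ := by linarith
  have hmem : ∀ w : ℂ, w.re < 0 → w ∉ Rbar α r → ee α r w ∈ EE β α r :=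
    fun w => ee_mem hβ0 hα
  -- the four paths
  have out_ray : ∀ t ∈ (Ioc (-ρ) ρ)ᶜ, ρ ≤ |t| := by
    intro t ht
    by_contra hcon
    rw [not_le, abs_lt] at hcon
    exact ht ⟨hcon.1, hcon.2.le⟩
  have ray_not : ∀ t ∈ (Ioc (-ρ) ρ)ᶜ, (-(c:ℂ) + t * Complex.I) ∉ Rbar α r := by
    intro t ht hm
    have := hm.2.2
    simp at this
    linarith [out_ray t ht]
  have left_not : ∀ t : ℝ, ((A:ℂ) + t * Complex.I) ∉ Rbar α r := by
    intro t hm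
    have := hm.1
    simp at this
    linarith
  have top_not : ∀ t : ℝ, ((t:ℂ) + ρ * Complex.I) ∉ Rbar α r := by
    intro t hm
    have := hm.2.2
    simp [abs_of_pos hρ0] at this
    linarith
  have bot_not : ∀ t : ℝ, ((t:ℂ) + (-ρ : ℝ) * Complex.I) ∉ Rbar α r := by
    intro t hm
    have := hm.2.2
    simp [abs_of_pos hρ0] at this
    linarith
  have cont_F : ∀ {p : ℝ → ℂ} {S : Set ℝ}, Continuous p → (∀ t ∈ S, p t ∈ Ropen α₁ r₁) →
      ContinuousOn (fun t => F (p t)) S := by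
    intro p S hp hS
    exact h.hF.continuousOn.comp hp.continuousOn hS
  have cont_e : ∀ {p : ℝ → ℂ} {S : Set ℝ}, Continuous p →
      (∀ t ∈ S, (p t).re < 0 ∧ p t ∉ Rbar α r) →
      ContinuousOn (fun t => ee α r (p t)) S := by
    intro p S hp hS t ht
    have := (ee_differentiableAt (hS t ht).1 (hS t ht).2).continuousAt
    exact (ContinuousAt.comp (f := p) this hp.continuousAt).continuousWithinAt
  have side : ∀ {p : ℝ → ℂ} {u v : ℝ}, u ≤ v → Continuous p →
      (∀ t ∈ Icc u v, (p t).re < 0 ∧ p t ∉ Rbar α r) → (∀ t ∈ Icc u v, p t ∈ Ropen α₁ r₁) →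
      IntervalIntegrable (fun t => F (p t) • ee α r (p t)) volume u v ∧
      (∫ t in u..v, F (p t) • ee α r (p t)) ∈ EE β α r := by
    intro p u v huv hp h1 h2
    have hi : IntervalIntegrable (fun t => F (p t) • ee α r (p t)) volume u v := by
      apply ContinuousOn.intervalIntegrable
      rw [uIcc_of_le huv]
      exact (cont_F hp h2).smul (cont_e hp h1)
    refine ⟨hi, ?_⟩
    rw [intervalIntegral.integral_of_le huv]
    refine EE_integral_mem hi.1 ?_
    refine (ae_restrict_iff' measurableSet_Ioc).2 (Eventually.of_forall fun t ht => ?_)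
    have := h1 t (Ioc_subset_Icc_self ht)
    exact Submodule.smul_mem _ _ (hmem _ this.1 this.2)
  obtain ⟨iL, mL⟩ := side (p := fun t : ℝ => (A:ℂ) + t * Complex.I) (u := -ρ) (v := ρ)
    (by linarith) (by fun_prop)
    (fun t ht => ⟨by simp; linarith, left_not t⟩)
    (fun t ht => ⟨by simpa using hA1, by simp; linarith,
      by simpa using lt_of_le_of_lt (abs_le.2 ht) hρ2⟩)
  obtain ⟨iT, mT⟩ := side (p := fun t : ℝ => (t:ℂ) + ρ * Complex.I) (u := A) (v := -c)
    hAc (by fun_prop)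
    (fun t ht => ⟨by simp; linarith [ht.2], top_not t⟩)
    (fun t ht => ⟨by simp; linarith [ht.1], by simp; linarith [ht.2],
      by simpa [abs_of_pos hρ0] using hρ2⟩)
  obtain ⟨iB, mB⟩ := side (p := fun t : ℝ => (t:ℂ) + (-ρ : ℝ) * Complex.I) (u := A) (v := -c)
    hAc (by fun_prop)
    (fun t ht => ⟨by simp; linarith [ht.2], bot_not t⟩)
    (fun t ht => ⟨by simp; linarith [ht.1], by simp; linarith [ht.2],
      by simpa [abs_of_pos hρ0] using hρ2⟩)
  have iR : IntegrableOn (fun t : ℝ => Laplace τ (-(c : ℂ) + t * Complex.I) •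
      ee α r (-(c : ℂ) + t * Complex.I)) (Ioc (-ρ) ρ)ᶜ := by
    refine ray_integrable ha (d := ρ - r) (by linarith) hk hLc measurableSet_Ioc.compl ?_ ?_
    · have : SecondCountableTopologyEither ℝ (BB α r) :=
        secondCountableTopologyEither_of_left ℝ (BB α r)
      refine ContinuousOn.aestronglyMeasurable ?_ measurableSet_Ioc.compl
      exact cont_e (by fun_prop) fun t ht => ⟨by simpa using hc0, ray_not t ht⟩
    · intro t ht
      refine ee_norm (by linarith) (ray_not t ht) fun s hs => ?_
      have h1 := Complex.abs_im_le_norm (s - (-(c:ℂ) + t * Complex.I))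
      have h2 : (s - (-(c:ℂ) + t * Complex.I)).im = s.im - t := by simp
      rw [h2] at h1
      have h3 := abs_sub_abs_le_abs_sub t s.im
      rw [abs_sub_comm] at h3
      linarith [hs.2.2, out_ray t ht]
  have mR := EE_integral_mem (β := β) iR ((ae_restrict_iff' measurableSet_Ioc.compl).2
    (Eventually.of_forall fun t ht => Submodule.smul_mem _ _
      (hmem _ (by simpa using hc0) (ray_not t ht))))
  refine ⟨_, Submodule.add_mem _ (Submodule.add_mem _ mR mL)
    (Submodule.smul_mem _ (-Complex.I) (Submodule.sub_mem _ mT mB)), ?_⟩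
  intro V g hg hVg hgb
  have hintg : Integrable (fun t : ℝ => Laplace τ (-(c : ℂ) + t * Complex.I) *
      g (-(c : ℂ) + t * Complex.I)) := by
    rw [← integrableOn_univ]
    refine ray_integrable ha (d := 1) (by linarith) hk hLc MeasurableSet.univ ?_ ?_
    · exact Continuous.aestronglyMeasurable (hg.continuous.comp (by fun_prop))
    · intro t _
      have := hgb (-(c : ℂ) + t * Complex.I) (by simpa using hc0)
      linarith
  rw [← integral_add_compl measurableSet_Ioc hintg (s := Ioc (-ρ) ρ)]
  -- the contour
  have hrect := Complex.integral_boundary_rect_eq_zero_of_differentiableOn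
    (fun w => F w * g w) (A + (-ρ : ℝ) * Complex.I) ((-c : ℝ) + ρ * Complex.I) (by
      refine DifferentiableOn.mul (h.hF.mono ?_) hg.differentiableOn
      intro s hs
      rw [Complex.mem_reProdIm] at hs
      obtain ⟨h1, h2⟩ := hs
      simp only [Complex.add_re, Complex.ofReal_re, Complex.mul_re, Complex.I_re, mul_zero,
        Complex.ofReal_im, Complex.I_im, mul_one, sub_self, add_zero, Complex.add_im,
        Complex.mul_im, zero_add] at h1 h2
      rw [uIcc_of_le hAc] at h1
      rw [uIcc_of_le (by linarith)] at h2
      exact ⟨by linarith [h1.1], by linarith [h1.2], lt_of_le_of_lt (abs_le.2 h2) hρ2⟩)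
  simp only [Complex.add_re, Complex.ofReal_re, Complex.mul_re, Complex.I_re, mul_zero,
        Complex.ofReal_im, Complex.I_im, mul_one, sub_self, add_zero, Complex.add_im,
        Complex.mul_im, zero_add, smul_eq_mul] at hrect
  have VL := V.intervalIntegral_comp_comm iL
  have VT := V.intervalIntegral_comp_comm iT
  have VB := V.intervalIntegral_comp_comm iB
  have VR := V.integral_comp_comm iR
  have eL : ∫ t in (-ρ)..ρ, V (F (A + t * Complex.I) • ee α r (A + t * Complex.I))
      = ∫ t in (-ρ)..ρ, F (A + t * Complex.I) * g (A + t * Complex.I) := by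
    refine intervalIntegral.integral_congr fun t _ => ?_
    simp only [map_smul, smul_eq_mul]
    rw [hVg _ (by simp; linarith)]
  have eT : ∫ t in A..(-c), V (F (t + ρ * Complex.I) • ee α r (t + ρ * Complex.I))
      = ∫ t in A..(-c), F (t + ρ * Complex.I) * g (t + ρ * Complex.I) := by
    refine intervalIntegral.integral_congr fun t ht => ?_
    rw [uIcc_of_le hAc] at ht
    simp only [map_smul, smul_eq_mul]
    rw [hVg _ (by simp; linarith [ht.2])]
  have eB : ∫ t in A..(-c), V (F (t + (-ρ : ℝ) * Complex.I) • ee α r (t + (-ρ : ℝ) * Complex.I))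
      = ∫ t in A..(-c), F (t + (-ρ : ℝ) * Complex.I) * g (t + (-ρ : ℝ) * Complex.I) := by
    refine intervalIntegral.integral_congr fun t ht => ?_
    rw [uIcc_of_le hAc] at ht
    simp only [map_smul, smul_eq_mul]
    rw [hVg _ (by simp; linarith [ht.2])]
  have eR : ∫ t in (Ioc (-ρ) ρ)ᶜ, V (Laplace τ (-(c : ℂ) + t * Complex.I) •
      ee α r (-(c : ℂ) + t * Complex.I)) = ∫ t in (Ioc (-ρ) ρ)ᶜ,
      Laplace τ (-(c : ℂ) + t * Complex.I) * g (-(c : ℂ) + t * Complex.I) := by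
    congr 1; ext t
    simp only [map_smul, smul_eq_mul]
    rw [hVg _ (by simpa using hc0)]
  have eM : ∫ t in Ioc (-ρ) ρ, Laplace τ (-(c : ℂ) + t * Complex.I) *
      g (-(c : ℂ) + t * Complex.I) = ∫ t in (-ρ)..ρ, F ((-c : ℝ) + t * Complex.I) *
      g ((-c : ℝ) + t * Complex.I) := by
    rw [intervalIntegral.integral_of_le (by linarith)]
    refine setIntegral_congr_fun measurableSet_Ioc fun t ht => ?_
    have e : (((-c : ℝ) : ℂ) + t * Complex.I) = -(c : ℂ) + t * Complex.I := by push_cast; rfl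
    rw [e, h.hL (-(c : ℂ) + t * Complex.I) (by simp; linarith) (by simp; linarith)]
    simpa using lt_of_le_of_lt (abs_le.2 ⟨ht.1.le, ht.2⟩) hρ2
  rw [map_add, map_add, map_smul, map_sub, ← VL, ← VT, ← VB, ← VR, eL, eT, eB, eR, eM,
    smul_eq_mul]
  linear_combination Complex.I * hrect - ((∫ t in (-ρ)..ρ, F ((-c : ℝ) + t * Complex.I) *
      g ((-c : ℝ) + t * Complex.I)) - ∫ t in (-ρ)..ρ, F (A + t * Complex.I) *
        g (A + t * Complex.I)) * Complex.I_mul_I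

lemma close_of_dec3 {α r α₁ r₁ a β : ℝ} {τ τ' : ℝ → ℂ} {F : ℂ → ℂ} (hβ : β < α) (hα : α < 0)
    (hr : 0 < r) (ha : 0 < a) (haα : a < -α) (hα₁ : α₁ < α) (hr₁ : r < r₁)
    (h : Good α r α₁ r₁ a τ τ' F) (hk : Dec 3 a τ) : Close β α r τ' F := by
  obtain ⟨X, hX, hV⟩ := contour hβ hα hr ha haα hα₁ hr₁ h hk
  obtain ⟨C, hC, hb, hb'⟩ := h.hb
  have hct : Continuous τ := continuous_iff_continuousAt.2 fun x => (h.hd x).continuousAt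
  have hLc := laplace_line_continuous hct hb (c := a / 2) (by linarith)
  have hpi : (2 * Real.pi : ℂ) ≠ 0 := by exact_mod_cast (by positivity : (2 * Real.pi : ℝ) ≠ 0)
  have hLd : ∀ t : ℝ, Laplace τ' (-((a / 2 : ℝ) : ℂ) + t * Complex.I) =
      Laplace τ (-((a / 2 : ℝ) : ℂ) + t * Complex.I) * (-((a / 2 : ℝ) : ℂ) + t * Complex.I) := by
    intro t
    rw [laplace_deriv h.hd h.hc hb hb' (by simp; linarith), h.h0 0 le_rfl]; ring
  have hi0 : Integrable fun t : ℝ => Laplace τ (-((a / 2 : ℝ) : ℂ) + t * Complex.I) := by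
    rw [← integrableOn_univ]
    have := ray_integrable (g := fun _ => (1:ℂ)) ha (d := 1) (by linarith) hk hLc MeasurableSet.univ
      aestronglyMeasurable_const (by
        intro t _; rw [norm_one]; have := norm_nonneg (-((a / 2 : ℝ) : ℂ) + t * Complex.I); linarith)
    simpa using this
  have hi1 : Integrable fun t : ℝ => Laplace τ' (-((a / 2 : ℝ) : ℂ) + t * Complex.I) := by
    rw [← integrableOn_univ]
    simp_rw [hLd]
    exact ray_integrable ha (d := 1) (by linarith) hk hLc MeasurableSet.univ
      (Continuous.aestronglyMeasurable (by fun_prop)) (by intro t _; linarith)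
  have inv0 := laplace_inversion hct h.h0 hb (c := a / 2) (by linarith) hi0 0
  have inv1 := laplace_inversion h.hc h.h0' hb' (c := a / 2) (by linarith) hi1
  refine close_of_mem hβ hα hr ha hα₁ hr₁ h
    (X := (2 * Real.pi : ℂ)⁻¹ • X) (Submodule.smul_mem _ _ hX) ?_ ?_
  · have := hV (ContinuousLinearMap.fst ℂ _ _) (fun _ => 1) (by fun_prop)
      (by intro w _; simp [ee]) (by intro w _; rw [norm_one]; linarith [norm_nonneg w])
    simp only [ContinuousLinearMap.coe_fst', mul_one] at this
    simp only [Complex.ofReal_zero, mul_zero, Complex.exp_zero, mul_one, h.h0 0 le_rfl] at inv0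
    rw [Prod.smul_fst, this, inv0, smul_zero]
  · intro x
    have := hV ((BoundedContinuousFunction.evalCLM ℂ x).comp
      ((ContinuousLinearMap.fst ℂ _ _).comp (ContinuousLinearMap.snd ℂ _ _)))
      (fun w => w * Complex.exp (w * (x : ℝ))) (by fun_prop)
      (by intro w hw; simp [ee, BoundedContinuousFunction.evalCLM, eC_apply hw])
      (by
        intro w hw
        rw [norm_mul, norm_exp_mul]
        have : Real.exp (w.re * x) ≤ 1 :=
          Real.exp_le_one_iff.2 (mul_nonpos_of_nonpos_of_nonneg hw.le x.2)
        nlinarith [norm_nonneg w])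
    have e : X.2.1 x = 2 * Real.pi * τ' x := by
      rw [← inv1 x]
      simp_rw [hLd, mul_assoc]
      exact this
    simp only [Prod.smul_snd, Prod.smul_fst, BoundedContinuousFunction.coe_smul, e, smul_eq_mul]
    field_simp

lemma Good.close {α r α₁ r₁ a β : ℝ} {τ τ' : ℝ → ℂ} {F : ℂ → ℂ} (hβ : β < α) (hα : α < 0)
    (hr : 0 < r) (ha : 0 < a) (haα : a < -α) (hα₁ : α₁ < α) (hr₁ : r < r₁)
    (h : Good α r α₁ r₁ a τ τ' F) : Close β α r τ' F := by
  refine Close.of_approx fun ε hε => ?_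
  obtain ⟨σ, σ', G, hG, hD, h1, h2⟩ := smoothing_step ha h (h.dec_one ha) hε
  refine ⟨σ', G, ?_, h1, h2⟩
  refine Close.of_approx fun ε hε => ?_
  obtain ⟨υ, υ', H, hH, hD', h1, h2⟩ := smoothing_step ha hG hD hε
  exact ⟨υ', H, close_of_dec3 hβ hα hr ha haα hα₁ hr₁ hH hD', h1, h2⟩


lemma growth {τ τ' : ℝ → ℂ} (hd : ∀ x, HasDerivAt τ (τ' x) x)
    (ht : Tendsto τ' atTop (nhds 0)) {δ : ℝ} (hδ : 0 < δ) :
    ∃ C, 0 ≤ C ∧ ∀ x : ℝ, 0 ≤ x → ‖τ x‖ ≤ C + δ * x := by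
  have hct : Continuous τ := continuous_iff_continuousAt.2 fun x => (hd x).continuousAt
  have h1 : ∀ᶠ x in atTop, ‖τ' x‖ ≤ δ := by
    have := (tendsto_zero_iff_norm_tendsto_zero.1 ht).eventually_le_const hδ
    exact this
  obtain ⟨X₀, hX₀⟩ := eventually_atTop.1 h1
  set X := max X₀ 0 with hX
  obtain ⟨C, hC⟩ := (isCompact_Icc (a := (0:ℝ)) (b := X)).exists_bound_of_continuousOn
    hct.continuousOn
  have hX0 : 0 ≤ X := le_max_right _ _
  have hCp : 0 ≤ C := (norm_nonneg _).trans (hC 0 ⟨le_rfl, hX0⟩)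
  refine ⟨C, hCp, fun x hx => ?_⟩
  rcases le_total x X with h | h
  · have := hC x ⟨hx, h⟩
    have : 0 ≤ δ * x := by positivity
    linarith [hC x ⟨hx, h⟩]
  · have := Convex.norm_image_sub_le_of_norm_hasDerivWithin_le (f := τ) (f' := τ') (s := Ici X)
      (C := δ) (x := X) (y := x)
      (fun y _ => (hd y).hasDerivWithinAt)
      (fun y hy => hX₀ y ((le_max_left _ _).trans hy)) (convex_Ici X) self_mem_Ici h
    rw [Real.norm_of_nonneg (by linarith)] at this
    have h2 := hC X ⟨hX0, le_rfl⟩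
    have h3 := norm_sub_norm_le (τ x) (τ X)
    nlinarith

/-- The dilated function. -/
noncomputable def dil (τ : ℝ → ℂ) (η x : ℝ) : ℂ :=
  (1 + η : ℝ) * Real.exp (-(η * x)) * τ ((1 + η) * x)

/-- The derivative of the dilated function. -/
noncomputable def dil' (τ τ' : ℝ → ℂ) (η x : ℝ) : ℂ :=
  (1 + η : ℝ) ^ 2 * Real.exp (-(η * x)) * τ' ((1 + η) * x) - η * dil τ η x

lemma dil_deriv {τ τ' : ℝ → ℂ} (hd : ∀ x, HasDerivAt τ (τ' x) x) (η x : ℝ) :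
    HasDerivAt (dil τ η) (dil' τ τ' η x) x := by
  have h1 : HasDerivAt (fun x : ℝ => τ ((1 + η) * x)) ((1 + η : ℝ) • τ' ((1 + η) * x)) x := by
    have := (hd ((1 + η) * x)).scomp x ((hasDerivAt_id x).const_mul (1 + η))
    rw [mul_one] at this
    exact this
  have h2 := ((hasDerivAt_cexp_mul (-(η:ℂ)) x).const_mul ((1 + η : ℝ) : ℂ)).mul h1
  have e : ∀ y : ℝ, Complex.exp (-(η:ℂ) * y) = (Real.exp (-(η * y)) : ℂ) := by
    intro y; push_cast; ring_nf
  simp only [e] at h2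
  have h3 : HasDerivAt (dil τ η) _ x := h2
  convert h3 using 1
  rw [dil', dil, Complex.real_smul]; ring

lemma dil_laplace (τ : ℝ → ℂ) {η : ℝ} (hη : 0 < η) (s : ℂ) :
    Laplace (dil τ η) s = Laplace τ ((s + η) / (1 + η : ℝ)) := by
  have hμ : 0 < 1 + η := by linarith
  have hμ' : ((1 + η : ℝ) : ℂ) ≠ 0 := by exact_mod_cast hμ.ne'
  have := integral_comp_mul_left_Ioi
    (fun y : ℝ => τ y * Complex.exp (-((s + η) / (1 + η : ℝ) * (y : ℂ)))) 0 hμ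
  rw [mul_zero] at this
  rw [Laplace, Laplace]
  have e : ∀ x : ℝ, dil τ η x * Complex.exp (-(s * (x : ℂ))) = ((1 + η : ℝ) : ℂ) *
      (τ ((1 + η) * x) * Complex.exp (-((s + η) / (1 + η : ℝ) * (((1 + η) * x : ℝ) : ℂ)))) := by
    intro x
    have e1 : (s + η) / (1 + η : ℝ) * (((1 + η) * x : ℝ) : ℂ) = s * x + η * x := by
      push_cast; push_cast at hμ'; field_simp
    rw [e1, dil, Complex.ofReal_exp, neg_add, Complex.exp_add]
    push_cast; ring
  simp_rw [e]
  rw [integral_const_mul, this, Complex.real_smul, Complex.ofReal_inv, mul_inv_cancel_left₀ hμ']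

lemma map_Rbar {α r η : ℝ} (hα : α < 0) (hr : 0 < r) (hη : 0 < η) {s : ℂ} (hs : s ∈ Rbar α r) :
    (s + η) / (1 + η : ℝ) ∈ Rbar α r := by
  have hμ : 0 < 1 + η := by linarith
  obtain ⟨h1, h2, h3⟩ := hs
  refine ⟨?_, ?_, ?_⟩
  · rw [Complex.div_ofReal_re, le_div_iff₀ hμ]; simp; nlinarith
  · rw [Complex.div_ofReal_re, div_le_iff₀ hμ]; simp; linarith
  · rw [Complex.div_ofReal_im, abs_div, abs_of_pos hμ, div_le_iff₀ hμ]; simp; nlinarith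

lemma dil_good {α r η : ℝ} (hα : α < 0) (hr : 0 < r) (hη : 0 < η) {τ τ' : ℝ → ℂ} {F : ℂ → ℂ}
    (hd : ∀ x, HasDerivAt τ (τ' x) x) (hc : Continuous τ') (h0 : ∀ x ≤ 0, τ x = 0)
    (h0' : ∀ x ≤ 0, τ' x = 0) (ht : Tendsto τ' atTop (nhds 0))
    (hF : DifferentiableOn ℂ F (Ropen α r)) (hFc : ContinuousOn F (Rbar α r))
    (hL : ∀ s ∈ Rbar α r, 0 < s.re → F s = Laplace τ s) :
    Good α r (1 - (1 - α) * (1 + η)) (r * (1 + η)) (min (η / 2) (-α / 2))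
      (dil τ η) (dil' τ τ' η) (fun s => F ((s + η) / (1 + η : ℝ))) := by
  have hμ : 0 < 1 + η := by linarith
  have hμ' : ((1 + η : ℝ) : ℂ) ≠ 0 := by exact_mod_cast hμ.ne'
  have hct : Continuous τ := continuous_iff_continuousAt.2 fun x => (hd x).continuousAt
  have hneg : ∀ x ≤ 0, (1 + η) * x ≤ 0 := fun x hx => mul_nonpos_of_nonneg_of_nonpos hμ.le hx
  refine ⟨dil_deriv hd η, ?_, ?_, ?_, ?_, ?_, ?_, ?_⟩
  · unfold dil' dil; fun_prop
  · intro x hx; simp [dil, h0 _ (hneg x hx)]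
  · intro x hx; simp [dil', dil, h0 _ (hneg x hx), h0' _ (hneg x hx)]
  · obtain ⟨C, hC, hCb⟩ := growth hd ht one_pos
    obtain ⟨M, hM, hMb⟩ : ∃ M, 0 ≤ M ∧ ∀ x : ℝ, 0 ≤ x → ‖τ' x‖ ≤ M := by
      have h1 : ∀ᶠ x in atTop, ‖τ' x‖ ≤ 1 :=
        (tendsto_zero_iff_norm_tendsto_zero.1 ht).eventually_le_const one_pos
      obtain ⟨X₀, hX₀⟩ := eventually_atTop.1 h1
      obtain ⟨M, hM⟩ := (isCompact_Icc (a := (0:ℝ)) (b := X₀)).exists_bound_of_continuousOn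
        hc.continuousOn
      refine ⟨max M 1, by positivity, fun x hx => ?_⟩
      rcases le_total x X₀ with h | h
      · exact (hM x ⟨hx, h⟩).trans (le_max_left _ _)
      · exact (hX₀ x h).trans (le_max_right _ _)
    set a := min (η / 2) (-α / 2) with ha
    set K := (1 + η) * (C + (1 + η) * (2 / η)) with hK
    have hK0 : 0 ≤ K := by positivity
    have b1 : ∀ x : ℝ, 0 ≤ x → ‖dil τ η x‖ ≤ K * Real.exp (-(a * x)) := by
      intro x hx
      have hx' : 0 ≤ (1 + η) * x := by positivity
      rw [dil, norm_mul, norm_mul, Complex.norm_real, Complex.norm_real, Real.norm_of_nonneg hμ.le,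
        Real.norm_of_nonneg (Real.exp_nonneg _)]
      have e1 : Real.exp (-(η * x)) = Real.exp (-(η / 2 * x)) * Real.exp (-(η / 2 * x)) := by
        rw [← Real.exp_add]; ring_nf
      have e2 : Real.exp (-(η / 2 * x)) * (C + 1 * ((1 + η) * x)) ≤ C + (1 + η) * (2 / η) := by
        have e3 : Real.exp (-(η / 2 * x)) ≤ 1 := Real.exp_le_one_iff.2 (by
          have : 0 ≤ η / 2 * x := by positivity
          linarith)
        have e4 : Real.exp (-(η / 2 * x)) * x ≤ 2 / η := by
          rw [le_div_iff₀ hη]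
          have e5 := Real.add_one_le_exp (η / 2 * x)
          have e6 : Real.exp (-(η / 2 * x)) * Real.exp (η / 2 * x) = 1 := by
            rw [← Real.exp_add]; simp
          have := mul_le_mul_of_nonneg_left e5 (Real.exp_nonneg (-(η / 2 * x)))
          rw [e6] at this
          nlinarith [Real.exp_nonneg (-(η / 2 * x))]
        have t1 : Real.exp (-(η / 2 * x)) * C ≤ 1 * C := by gcongr
        have t2 : (1 + η) * (Real.exp (-(η / 2 * x)) * x) ≤ (1 + η) * (2 / η) := by gcongr
        nlinarith
      calc _ ≤ (1 + η) * Real.exp (-(η * x)) * (C + 1 * ((1 + η) * x)) := by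
            gcongr; exact hCb _ hx'
        _ = (1 + η) * (Real.exp (-(η / 2 * x)) * (C + 1 * ((1 + η) * x))) *
            Real.exp (-(η / 2 * x)) := by rw [e1]; ring
        _ ≤ (1 + η) * (C + (1 + η) * (2 / η)) * Real.exp (-(a * x)) := by
            gcongr; exact min_le_left _ _
    refine ⟨(1 + η) ^ 2 * M + η * K + K, by positivity, fun x hx => (b1 x hx).trans ?_,
      fun x hx => ?_⟩
    · gcongr
      have : 0 ≤ (1 + η) ^ 2 * M + η * K := by positivity
      linarith
    · have hx' : 0 ≤ (1 + η) * x := by positivity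
      have b2 := b1 x hx
      have b3 : ‖((1 + η : ℝ) : ℂ) ^ 2 * Real.exp (-(η * x)) * τ' ((1 + η) * x)‖
          ≤ (1 + η) ^ 2 * Real.exp (-(a * x)) * M := by
        rw [norm_mul, norm_mul, norm_pow, Complex.norm_real, Complex.norm_real,
          Real.norm_of_nonneg hμ.le, Real.norm_of_nonneg (Real.exp_nonneg _)]
        gcongr
        · have : a ≤ η / 2 := min_le_left _ _
          linarith
        · exact hMb _ hx'
      have b4 : ‖(η : ℂ) * dil τ η x‖ ≤ η * (K * Real.exp (-(a * x))) := by
        rw [norm_mul, Complex.norm_real, Real.norm_of_nonneg hη.le]; gcongr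
      have := norm_sub_le (((1 + η : ℝ) : ℂ) ^ 2 * Real.exp (-(η * x)) * τ' ((1 + η) * x))
        ((η : ℂ) * dil τ η x)
      rw [dil']
      nlinarith [mul_nonneg hK0 (Real.exp_nonneg (-(a * x)))]
  · refine hF.comp (by fun_prop) ?_
    rintro s ⟨h1, h2, h3⟩
    refine ⟨?_, ?_, ?_⟩
    · rw [Complex.div_ofReal_re, lt_div_iff₀ hμ]; simp; nlinarith
    · rw [Complex.div_ofReal_re, div_lt_iff₀ hμ]; simp; linarith
    · rw [Complex.div_ofReal_im, abs_div, abs_of_pos hμ, div_lt_iff₀ hμ]; simpa using h3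
  · exact hFc.comp (by fun_prop) fun s hs => map_Rbar hα hr hη hs
  · intro s h1 h2 h3
    have ha1 := min_le_left (η / 2) (-α / 2)
    have ha2 := min_le_right (η / 2) (-α / 2)
    have hre : 0 < ((s + η) / (1 + η : ℝ)).re := by
      rw [Complex.div_ofReal_re]
      refine div_pos ?_ hμ
      simp; linarith
    rw [dil_laplace τ hη]
    refine hL _ ⟨by linarith, ?_, ?_⟩ hre
    · rw [Complex.div_ofReal_re, div_le_iff₀ hμ]; simp; linarith
    · rw [Complex.div_ofReal_im, abs_div, abs_of_pos hμ, div_le_iff₀ hμ]; simpa using h3.le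

lemma dil_tail {τ τ' : ℝ → ℂ} {C δ X η x : ℝ} (hC : 0 ≤ C) (hδ : 0 < δ) (hX : 0 ≤ X)
    (hb : ∀ x : ℝ, 0 ≤ x → ‖τ x‖ ≤ C + δ * x) (hb' : ∀ x, X ≤ x → ‖τ' x‖ ≤ δ)
    (hη : 0 < η) (hη1 : η ≤ 1) (hx : X ≤ x) :
    ‖τ' x - dil' τ τ' η x‖ ≤ 9 * δ + 2 * η * C := by
  have hμ : 0 < 1 + η := by linarith
  have hx0 : 0 ≤ x := hX.trans hx
  have hx' : X ≤ (1 + η) * x := by nlinarith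
  have hE : Real.exp (-(η * x)) ≤ 1 := Real.exp_le_one_iff.2 (by
    have : 0 ≤ η * x := by positivity
    linarith)
  have hE0 := Real.exp_nonneg (-(η * x))
  have b3 : ‖((1 + η : ℝ) : ℂ) ^ 2 * Real.exp (-(η * x)) * τ' ((1 + η) * x)‖ ≤ 4 * δ := by
    rw [norm_mul, norm_mul, norm_pow, Complex.norm_real, Complex.norm_real,
      Real.norm_of_nonneg hμ.le, Real.norm_of_nonneg hE0]
    calc _ ≤ (1 + 1) ^ 2 * 1 * δ := by
          gcongr; exact hb' _ hx'
      _ = _ := by ring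
  have b4 : ‖(η : ℂ) * dil τ η x‖ ≤ 4 * δ + 2 * η * C := by
    rw [dil, norm_mul, norm_mul, norm_mul, Complex.norm_real, Complex.norm_real, Complex.norm_real,
      Real.norm_of_nonneg hμ.le, Real.norm_of_nonneg hE0, Real.norm_of_nonneg hη.le]
    have e5 := Real.add_one_le_exp (η * x)
    have e6 : Real.exp (-(η * x)) * Real.exp (η * x) = 1 := by
      rw [← Real.exp_add]; simp
    have e7 : Real.exp (-(η * x)) * (η * x) ≤ 1 := by
      rw [← e6]; gcongr; linarith
    calc _ ≤ η * ((1 + 1) * Real.exp (-(η * x)) * (C + δ * ((1 + 1) * x))) := by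
          gcongr
          refine (hb _ (hX.trans hx')).trans ?_
          gcongr
      _ = 2 * η * (Real.exp (-(η * x)) * C) + 4 * δ * (Real.exp (-(η * x)) * (η * x)) := by ring
      _ ≤ 2 * η * (1 * C) + 4 * δ * 1 := by gcongr
      _ = _ := by ring
  rw [dil']
  have t1 := norm_sub_le (τ' x) (((1 + η : ℝ) : ℂ) ^ 2 * Real.exp (-(η * x)) * τ' ((1 + η) * x)
    - (η : ℂ) * dil τ η x)
  have t2 := norm_sub_le (((1 + η : ℝ) : ℂ) ^ 2 * Real.exp (-(η * x)) * τ' ((1 + η) * x))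
    ((η : ℂ) * dil τ η x)
  linarith [hb' x hx]

lemma stepA {β α r : ℝ} (hβ : β < α) (hα : α < 0) (hr : 0 < r) {τ τ' : ℝ → ℂ} {F : ℂ → ℂ}
    (hd : ∀ x, HasDerivAt τ (τ' x) x) (hc : Continuous τ') (h0 : ∀ x ≤ 0, τ x = 0)
    (h0' : ∀ x ≤ 0, τ' x = 0) (ht : Tendsto τ' atTop (nhds 0))
    (hF : DifferentiableOn ℂ F (Ropen α r)) (hFc : ContinuousOn F (Rbar α r))
    (hL : ∀ s ∈ Rbar α r, 0 < s.re → F s = Laplace τ s) : Close β α r τ' F := by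
  refine Close.of_approx fun ε hε => ?_
  have hct : Continuous τ := continuous_iff_continuousAt.2 fun x => (hd x).continuousAt
  set δ := ε / 18 with hδ
  have hδ0 : 0 < δ := by positivity
  obtain ⟨C, hC, hb⟩ := growth hd ht hδ0
  have h1 : ∀ᶠ x in atTop, ‖τ' x‖ ≤ δ :=
    (tendsto_zero_iff_norm_tendsto_zero.1 ht).eventually_le_const hδ0
  obtain ⟨X₀, hX₀⟩ := eventually_atTop.1 h1
  set X := max X₀ 0 with hX
  have hX0 : 0 ≤ X := le_max_right _ _
  have hb' : ∀ x, X ≤ x → ‖τ' x‖ ≤ δ := fun x hx => hX₀ x ((le_max_left _ _).trans hx)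
  -- compact part
  have hcpt : ∀ᶠ η in nhds (0:ℝ), ∀ x ∈ Icc 0 X, ‖τ' x - dil' τ τ' η x‖ < ε := by
    refine isCompact_Icc.eventually_forall_of_forall_eventually fun x _ => ?_
    have hcc : Continuous fun z : ℝ × ℝ => ‖τ' z.2 - dil' τ τ' z.1 z.2‖ := by
      unfold dil' dil; fun_prop
    have : ‖τ' x - dil' τ τ' 0 x‖ < ε := by simp [dil', hε]
    have := (hcc.continuousAt (x := ((0:ℝ), x))).eventually_lt_const this
    exact this
  have hC1 : ∀ᶠ η in nhds (0:ℝ), 2 * η * C < ε / 2 := by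
    have : Continuous fun η : ℝ => 2 * η * C := by fun_prop
    exact (this.continuousAt (x := (0:ℝ))).eventually_lt_const (by simp; positivity)
  have hη1 : ∀ᶠ η in nhds (0:ℝ), η < 1 := eventually_lt_nhds one_pos
  obtain ⟨κ, hκ, hU⟩ := Metric.uniformContinuousOn_iff.1
    ((Rbar_compact α r).uniformContinuousOn_of_continuous hFc) ε hε
  have hK : ∀ᶠ η in nhds (0:ℝ), η * (1 + (|α| + 1 + |r|)) < κ := by
    have : Continuous fun η : ℝ => η * (1 + (|α| + 1 + |r|)) := by fun_prop
    exact (this.continuousAt (x := (0:ℝ))).eventually_lt_const (by simpa using hκ)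
  have hall := (hcpt.and (hC1.and (hη1.and hK))).filter_mono
    (nhdsWithin_le_nhds (s := Ioi (0:ℝ)))
  obtain ⟨η, ⟨g1, g2, g3, g4⟩, g5⟩ := (hall.and self_mem_nhdsWithin).exists
  have hη : 0 < η := g5
  have hμ : 0 < 1 + η := by linarith
  refine ⟨dil' τ τ' η, fun s => F ((s + η) / (1 + η : ℝ)), ?_, fun x hx => ?_, fun s hs => ?_⟩
  · refine (dil_good hα hr hη hd hc h0 h0' ht hF hFc hL).close hβ hα hr ?_ ?_ ?_ ?_
    · exact lt_min (by positivity) (by linarith)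
    · exact lt_of_le_of_lt (min_le_right _ _) (by linarith)
    · nlinarith
    · nlinarith
  · rcases le_total x X with h | h
    · exact (g1 x ⟨hx, h⟩).le
    · have := dil_tail hC hδ0 hX0 hb hb' hη g3.le h
      linarith
  · have hm := map_Rbar hα hr hη hs
    have := hU s hs _ hm ?_
    · rw [dist_eq_norm] at this; exact this.le
    · refine lt_of_le_of_lt ?_ g4
      have hμ' : ((1 + η : ℝ) : ℂ) ≠ 0 := by exact_mod_cast hμ.ne'
      have e : s - (s + η) / (1 + η : ℝ) = η * (s - 1) / (1 + η : ℝ) := by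
        field_simp; push_cast; ring
      rw [dist_eq_norm, e, norm_div, norm_mul, Complex.norm_real, Complex.norm_real,
        Real.norm_of_nonneg hη.le, Real.norm_of_nonneg hμ.le]
      have t1 := norm_sub_le s 1
      rw [norm_one] at t1
      have t2 := Rbar_norm hs
      refine (div_le_self (by positivity) (by linarith)).trans ?_
      gcongr; linarith

theorem Vbeta_dense_in_Valphar
    (β α r : ℝ) (hβ : β < α) (hα : α < 0) (hr : 0 < r)
    (τ τ' : ℝ → ℂ) (F : ℂ → ℂ)
    (hder : ∀ x ∈ Set.Ici (0 : ℝ), HasDerivWithinAt τ (τ' x) (Set.Ici 0) x)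
    (hcont : ContinuousOn τ' (Set.Ici 0))
    (hto0 : Tendsto τ' atTop (nhds 0))
    (hFan : DifferentiableOn ℂ F (Ropen α r))
    (hFcont : ContinuousOn F (Rbar α r))
    (hFeq : ∀ s ∈ Rbar α r, 0 < s.re → F s = Laplace τ s)
    (ε : ℝ) (hε : 0 < ε) :
    ∃ (σ σ' : ℝ → ℂ) (G : ℂ → ℂ),
      (∀ x ∈ Set.Ici (0 : ℝ), HasDerivWithinAt σ (σ' x) (Set.Ici 0) x) ∧
      ContinuousOn σ' (Set.Ici 0) ∧
      Tendsto σ' atTop (nhds 0) ∧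
      DifferentiableOn ℂ G {s : ℂ | β < s.re} ∧
      (∀ s : ℂ, 0 < s.re → G s = Laplace σ s) ∧
      ∃ ε₁ ε₂ : ℝ, 0 ≤ ε₁ ∧ 0 ≤ ε₂ ∧ ε₁ + ε₂ < ε ∧
        (∀ x : ℝ, 0 ≤ x → ‖τ' x - σ' x‖ ≤ ε₁) ∧
        (∀ s ∈ Rbar α r, ‖F s - G s‖ ≤ ε₂) := by
  have hβ0 : β < 0 := by linarith
  -- subtract exponentials
  obtain ⟨p, hp, hp0, hp0'⟩ : ∃ p ∈ ExpS β, p.1 0 = τ 0 ∧ p.2.1 0 = τ' 0 := by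
    set w : ℂ := ((β - 1 : ℝ) : ℂ) with hw
    set a₂ : ℂ := w * τ 0 - τ' 0 with ha₂
    refine ⟨(τ 0 - a₂) • expTriple w + a₂ • expTriple (w - 1),
      Submodule.add_mem _ (Submodule.smul_mem _ _ (expTriple_mem (by simp [hw])))
        (Submodule.smul_mem _ _ (expTriple_mem (by simp [hw]; linarith))), ?_, ?_⟩
    · simp [expTriple]
    · simp [expTriple, ha₂]; ring
  have P := expProps hβ0 hp
  set d : ℝ → ℂ := fun x => τ x - p.1 x with hd
  set d' : ℝ → ℂ := fun x => τ' x - p.2.1 x with hd'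
  have d0 : d 0 = 0 := by simp [hd, hp0]
  have d0' : d' 0 = 0 := by simp [hd', hp0']
  have hdd : ∀ x ∈ Ici (0:ℝ), HasDerivWithinAt d (d' x) (Ici 0) x := fun x hx =>
    (hder x hx).sub (P.hd x).hasDerivWithinAt
  set σ : ℝ → ℂ := fun x => d (max x 0) with hσ
  set σ' : ℝ → ℂ := fun x => d' (max x 0) with hσ'
  have s0 : ∀ x ≤ 0, σ x = 0 := fun x hx => by simp [hσ, max_eq_right hx, d0]
  have s0' : ∀ x ≤ 0, σ' x = 0 := fun x hx => by simp [hσ', max_eq_right hx, d0']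
  have s1 : ∀ x, 0 ≤ x → σ x = d x := fun x hx => by simp [hσ, max_eq_left hx]
  have s1' : ∀ x, 0 ≤ x → σ' x = d' x := fun x hx => by simp [hσ', max_eq_left hx]
  have hσd : ∀ x, HasDerivAt σ (σ' x) x := by
    intro x
    rcases lt_trichotomy x 0 with h | h | h
    · rw [s0' x h.le]
      refine (hasDerivAt_const x (0:ℂ)).congr_of_eventuallyEq ?_
      filter_upwards [Iio_mem_nhds h] with y hy
      exact s0 y (le_of_lt hy)
    · subst h
      rw [s0' 0 le_rfl]
      have hl : HasDerivWithinAt σ 0 (Iic 0) 0 :=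
        (hasDerivWithinAt_const (0:ℝ) (Iic 0) (0:ℂ)).congr (fun y hy => s0 y hy) (s0 0 le_rfl)
      have hri : HasDerivWithinAt σ 0 (Ici 0) 0 := by
        have := (hdd 0 self_mem_Ici).congr (fun y hy => s1 y hy) (s1 0 le_rfl)
        rwa [d0'] at this
      have := hl.union hri
      rwa [Iic_union_Ici, hasDerivWithinAt_univ] at this
    · rw [s1' x h.le]
      refine ((hdd x h.le).hasDerivAt (Ici_mem_nhds h)).congr_of_eventuallyEq ?_
      filter_upwards [Ioi_mem_nhds h] with y hy
      exact s1 y (le_of_lt hy)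
  have hσc : Continuous σ' := by
    have h1 : ContinuousOn d' (Ici 0) := hcont.sub P.hc.continuousOn
    exact h1.comp_continuous (by fun_prop) fun x => mem_Ici.2 (le_max_right _ _)
  have hσt : Tendsto σ' atTop (nhds 0) := by
    have : Tendsto d' atTop (nhds 0) := by simpa using hto0.sub P.ht
    refine this.congr' ?_
    filter_upwards [eventually_ge_atTop 0] with x hx
    exact (s1' x hx).symm
  have hσct : Continuous σ := continuous_iff_continuousAt.2 fun x => (hσd x).continuousAt
  obtain ⟨C, hC, hCb⟩ := growth hσd hσt one_pos
  have hσi : ∀ s : ℂ, 0 < s.re →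
      IntegrableOn (fun x : ℝ => σ x * Complex.exp (-(s * (x : ℂ)))) (Ioi 0) := by
    intro s hs
    refine laplace_integrable hσct.continuousOn (C := C + 2 / s.re) (a := -(s.re / 2)) ?_
      (by linarith)
    intro x hx
    have e1 := Real.add_one_le_exp (s.re / 2 * x)
    have e2 : 0 ≤ s.re / 2 * x := by positivity
    have e3 : -(-(s.re / 2) * x) = s.re / 2 * x := by ring
    rw [e3]
    refine (hCb x hx).trans ?_
    have e4 : x = 2 / s.re * (s.re / 2 * x) := by field_simp
    have e5 : 2 / s.re * (s.re / 2 * x) ≤ 2 / s.re * Real.exp (s.re / 2 * x) := by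
      gcongr; linarith
    have e6 : C * 1 ≤ C * Real.exp (s.re / 2 * x) := by gcongr; linarith
    rw [add_mul]; linarith
  have hclose : Close β α r σ' (fun s => F s - p.2.2 s) := by
    refine stepA hβ hα hr hσd hσc s0 s0' hσt ?_ ?_ ?_
    · exact hFan.sub (P.hG.mono fun s hs => lt_trans hβ hs.1)
    · exact hFcont.sub (P.hG.continuousOn.mono fun s hs => lt_of_lt_of_le hβ hs.1)
    · intro s hs hs0
      rw [hFeq s hs hs0, P.hL s hs0, sub_eq_iff_eq_add, Laplace, Laplace, Laplace,
        ← integral_add (hσi s hs0) (P.hi s hs0)]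
      refine setIntegral_congr_fun measurableSet_Ioi fun x hx => ?_
      have hx : (0:ℝ) < x := hx
      simp only [s1 x hx.le, hd]; ring
  obtain ⟨q, hq, q1, q2⟩ := hclose (ε / 3) (by positivity)
  have Q := expProps hβ0 (Submodule.add_mem _ hp hq)
  refine ⟨(p + q).1, (p + q).2.1, (p + q).2.2, fun x _ => (Q.hd x).hasDerivWithinAt,
    Q.hc.continuousOn, Q.ht, Q.hG, Q.hL, ε / 3, ε / 3, by positivity, by positivity, by linarith,
    fun x hx => ?_, fun s hs => ?_⟩
  · have := q1 x hx
    rw [s1' x hx] at this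
    simpa [hd', sub_sub] using this
  · simpa [sub_sub] using q2 s hs
end

section
/- Let α < 0 and r > 0, and let τ ∈ V_{α,r}, i.e., τ ∈ C¹[0,∞) with τ'(x) → 0 as x → ∞ and with an analytic extension of its Laplace transform to the open rectangle R_{α,r} that is continuous on the closed rectangle R̄_{α,r}. Then lim_{x→∞} τ(x) = 0. -/
open Filter Set MeasureTheory

open Topology in
lemma ik_diff (σ : ℝ → ℂ) (hσ : Continuous σ) (T : ℝ) :
    Differentiable ℂ (fun z : ℂ => ∫ t in (0:ℝ)..T, σ t * Complex.exp (-(z * (t : ℂ)))) := by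
  intro z0
  have hc : Continuous (fun p : ℂ × ℝ => σ p.2 * (Complex.exp (-(p.1 * (p.2 : ℂ))) * (-(p.2 : ℂ)))) := by
    fun_prop
  obtain ⟨C, hC⟩ := ((isCompact_closedBall z0 1).prod (isCompact_uIcc (a := (0:ℝ)) (b := T))).exists_bound_of_continuousOn
    hc.continuousOn
  have := intervalIntegral.hasDerivAt_integral_of_dominated_loc_of_deriv_le (𝕜 := ℂ)
    (μ := volume) (a := 0) (b := T)
    (F := fun (z : ℂ) (t : ℝ) => σ t * Complex.exp (-(z * (t : ℂ))))
    (F' := fun (z : ℂ) (t : ℝ) => σ t * (Complex.exp (-(z * (t : ℂ))) * (-(t : ℂ))))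
    (x₀ := z0) (bound := fun _ => C) (Metric.closedBall_mem_nhds z0 one_pos)
    (Eventually.of_forall fun z => (Continuous.aestronglyMeasurable (by fun_prop)))
    (Continuous.intervalIntegrable (by fun_prop) _ _)
    (Continuous.aestronglyMeasurable (by fun_prop))
    (Eventually.of_forall fun t ht z hz => hC (z, t) ⟨hz, uIoc_subset_uIcc ht⟩)
    (by simp)
    (Eventually.of_forall fun t ht z hz => by
      have h1 : HasDerivAt (fun z : ℂ => -(z * (t : ℂ))) (-(t : ℂ)) z := by
        simpa using! ((hasDerivAt_id z).mul_const (t : ℂ)).neg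
      exact h1.cexp.const_mul _)
  exact this.2.differentiableAt

/-- the auxiliary function. -/
noncomputable def ikPhi (σ : ℝ → ℂ) (z : ℂ) (T : ℝ) : ℂ :=
  z * (∫ t in (0:ℝ)..T, σ t * Complex.exp (-(z * (t : ℂ)))) + σ T * Complex.exp (-(z * (T : ℂ)))

lemma ikPhi_deriv (σ : ℝ → ℂ) (hσ : Continuous σ) (z : ℂ) (t : ℝ) (d : ℂ)
    (hd : HasDerivAt σ d t) :
    HasDerivAt (ikPhi σ z) (d * Complex.exp (-(z * (t : ℂ)))) t := by
  have hc : Continuous (fun t : ℝ => σ t * Complex.exp (-(z * (t : ℂ)))) := by fun_prop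
  have h1 := (hc.integral_hasStrictDerivAt 0 t).hasDerivAt.const_mul z
  have h2 : HasDerivAt (fun t : ℝ => -(z * (t : ℂ))) (-z) t := by
    simpa using! ((hasDerivAt_id t).ofReal_comp.const_mul z).neg
  have h3 := h1.add (hd.mul h2.cexp)
  refine h3.congr_deriv ?_
  ring

lemma ikPhi_bound (σ ρ : ℝ → ℂ) (hσ : Continuous σ) (ε a b : ℝ) (hab : a ≤ b)
    (hd : ∀ t, a ≤ t → HasDerivAt σ (ρ t) t) (hρ : ∀ t, a ≤ t → ‖ρ t‖ ≤ ε)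
    (z : ℂ) (hz : z.re ≠ 0) :
    ‖ikPhi σ z b - ikPhi σ z a‖ ≤ ε * ((Real.exp (-(z.re * a)) - Real.exp (-(z.re * b))) / z.re) := by
  have hB : ∀ t : ℝ, HasDerivAt
      (fun t => ε * ((Real.exp (-(z.re * a)) - Real.exp (-(z.re * t))) / z.re))
      (ε * Real.exp (-(z.re * t))) t := by
    intro t
    have h2 : HasDerivAt (fun t : ℝ => -(z.re * t)) (-z.re) t := by
      simpa using! ((hasDerivAt_id t).const_mul z.re).neg
    have h3 := ((h2.exp.const_sub (Real.exp (-(z.re * a)))).div_const z.re).const_mul ε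
    refine h3.congr_deriv ?_
    field_simp
  have hf : ∀ t, a ≤ t → HasDerivAt (fun t => ikPhi σ z t - ikPhi σ z a)
      (ρ t * Complex.exp (-(z * (t : ℂ)))) t := fun t ht =>
    (ikPhi_deriv σ hσ z t _ (hd t ht)).sub_const _
  refine image_norm_le_of_norm_deriv_right_le_deriv_boundary
    (f := fun t => ikPhi σ z t - ikPhi σ z a) (a := a) (b := b)
    (f' := fun t => ρ t * Complex.exp (-(z * (t : ℂ))))
    (fun t ht => (hf t ht.1).continuousAt.continuousWithinAt)
    (fun t ht => (hf t ht.1).hasDerivWithinAt) (by simp)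
    (B' := fun t => ε * Real.exp (-(z.re * t))) hB ?_ (right_mem_Icc.2 hab)
  intro t ht
  rw [norm_mul, Complex.norm_exp]
  have : (-(z * (t:ℂ))).re = -(z.re * t) := by simp
  rw [this]
  exact mul_le_mul_of_nonneg_right (hρ t ht.1) (Real.exp_pos _).le

open Topology Asymptotics in
lemma ik_growth (σ ρ : ℝ → ℂ) (X : ℝ)
    (hd : ∀ t, X ≤ t → HasDerivAt σ (ρ t) t) (hρ : ∀ t, X ≤ t → ‖ρ t‖ ≤ 1)
    (δ : ℝ) (hδ : 0 < δ) : σ =O[atTop] (fun t : ℝ => Real.exp (δ * t)) := by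
  have h1 : σ =O[atTop] (fun t : ℝ => (‖σ X‖ - X) + t) := by
    refine IsBigO.of_bound 1 ?_
    filter_upwards [eventually_ge_atTop X] with t ht
    have := (convex_Ici X).norm_image_sub_le_of_norm_hasDerivWithin_le (f := σ) (f' := ρ) (C := 1)
      (fun x hx => (hd x hx).hasDerivWithinAt) (fun x hx => hρ x hx) (mem_Ici.2 le_rfl) (mem_Ici.2 ht)
    rw [Real.norm_of_nonneg (sub_nonneg.2 ht)] at this
    have h2 := norm_sub_norm_le (σ t) (σ X)
    rw [one_mul]
    refine le_trans ?_ (le_abs_self _)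
    linarith
  refine h1.trans (IsBigO.add ?_ ?_)
  · have := isLittleO_pow_exp_pos_mul_atTop 0 hδ
    simp only [pow_zero] at this
    exact (isBigO_const_const (‖σ X‖ - X) one_ne_zero atTop).trans this.isBigO
  · have := isLittleO_pow_exp_pos_mul_atTop 1 hδ
    simp only [pow_one] at this
    exact this.isBigO

open Topology Asymptotics in
lemma ikPhi_tendsto (σ ρ : ℝ → ℂ) (hσ : Continuous σ) (X : ℝ)
    (hd : ∀ t, X ≤ t → HasDerivAt σ (ρ t) t) (hρ : ∀ t, X ≤ t → ‖ρ t‖ ≤ 1)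
    (z : ℂ) (hz : 0 < z.re) :
    Tendsto (ikPhi σ z) atTop (𝓝 (z * Laplace σ z)) := by
  have hO : (fun t : ℝ => σ t * Complex.exp (-(z * (t : ℂ)))) =O[atTop]
      (fun t : ℝ => Real.exp (-(z.re/2) * t)) := by
    have h1 := ik_growth σ ρ X hd hρ (z.re/2) (by positivity)
    have h2 : (fun t : ℝ => Complex.exp (-(z * (t : ℂ)))) =O[atTop]
        (fun t : ℝ => Real.exp (-z.re * t)) := by
      refine IsBigO.of_bound 1 (Eventually.of_forall fun t => ?_)
      rw [Complex.norm_exp]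
      simp
    refine (h1.mul h2).congr_right fun t => ?_
    rw [← Real.exp_add]
    congr 1
    ring
  have hc : Continuous (fun t : ℝ => σ t * Complex.exp (-(z * (t : ℂ)))) := by fun_prop
  have hint : IntegrableOn (fun t : ℝ => σ t * Complex.exp (-(z * (t : ℂ)))) (Ioi 0) := by
    have := integrable_of_isBigO_exp_neg (a := 0) (b := z.re/2) (by positivity)
      hc.norm.continuousOn hO.norm_left
    exact (integrable_norm_iff hc.aestronglyMeasurable).1 this
  have h0 : Tendsto (fun t : ℝ => σ t * Complex.exp (-(z * (t : ℂ)))) atTop (𝓝 0) := by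
    refine hO.trans_tendsto ?_
    refine Real.tendsto_exp_atBot.comp ?_
    exact tendsto_id.const_mul_atTop_of_neg (by linarith)
  have h3 := ((intervalIntegral_tendsto_integral_Ioi 0 hint tendsto_id).const_mul z).add h0
  rw [add_zero] at h3
  exact h3

lemma ik_factor (z : ℂ) (R : ℝ) (hR : 0 < R) (hz : ‖z‖ = R) :
    ‖1 + z ^ 2 / (R : ℂ) ^ 2‖ = 2 * |z.re| / R := by
  have hRc : (R : ℂ) ≠ 0 := by exact_mod_cast hR.ne'
  have h1 : 1 + z ^ 2 / (R : ℂ) ^ 2 = z * ((2 * z.re : ℝ) : ℂ) / (R : ℂ) ^ 2 := by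
    have h2 : (R : ℂ) ^ 2 = z * (starRingEnd ℂ) z := by
      rw [Complex.mul_conj, Complex.normSq_eq_norm_sq, hz]; push_cast; rfl
    have h3 := Complex.add_conj z
    field_simp
    rw [← h3, h2]
    ring
  rw [h1, norm_div, norm_mul, hz, norm_pow, Complex.norm_real, Complex.norm_real,
    Real.norm_eq_abs, Real.norm_eq_abs, abs_mul, abs_of_pos hR, abs_two]
  field_simp

open Topology in
lemma ik_main (σ ρ : ℝ → ℂ) (hσ : Continuous σ) (F : ℂ → ℂ) (R : ℝ) (hR : 0 < R)
    (hd : ∀ t, 0 < t → HasDerivAt σ (ρ t) t)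
    (hto0 : Tendsto ρ atTop (𝓝 0))
    (U : Set ℂ) (hU : IsOpen U) (hRU : Metric.closedBall 0 R ⊆ U)
    (hF : DifferentiableOn ℂ F U)
    (hFeq : ∀ s ∈ U, 0 < s.re → F s = Laplace σ s) :
    Tendsto σ atTop (𝓝 0) := by
  have hev : ∀ ε > 0, ∃ X > 0, ∀ t, X ≤ t → ‖ρ t‖ ≤ ε := by
    intro ε hε
    have := (hto0.norm.eventually_lt_const (u := ε) (by simpa using hε))
    obtain ⟨X, hX⟩ := eventually_atTop.1 this
    exact ⟨max X 1, by positivity, fun t ht => (hX t ((le_max_left _ _).trans ht)).le⟩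
  obtain ⟨X1, hX1, hρ1⟩ := hev 1 one_pos
  -- differentiability of H_T
  have hH : ∀ T, DifferentiableOn ℂ (fun z => z * F z - ikPhi σ z T) U := by
    intro T
    have h1 : Differentiable ℂ (fun z => ikPhi σ z T) := by
      unfold ikPhi
      exact (differentiable_id.mul (ik_diff σ hσ T)).add (by fun_prop)
    exact (differentiableOn_id.mul hF).sub h1.differentiableOn
  have key : ∀ ε > 0, ∃ X > 0, ∃ B, ∀ T, X ≤ T → ‖σ T‖ ≤ 2 * ε / R + 2 * B / R / T := by
    intro ε hε
    obtain ⟨X, hX, hρ⟩ := hev ε hε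
    obtain ⟨B, hB⟩ := (isCompact_closedBall (0:ℂ) R).exists_bound_of_continuousOn
      ((hH X).continuousOn.mono hRU)
    have hB0 : 0 ≤ B := (norm_nonneg _).trans (hB 0 (by simp [hR.le]))
    refine ⟨X, hX, B, fun T hT => ?_⟩
    have hT0 : 0 < T := hX.trans_le hT
    set k : ℂ → ℂ := fun z => (z * F z - ikPhi σ z T) * Complex.exp (z * T) *
      (1 + z ^ 2 / (R : ℂ) ^ 2) with hk
    have hkd : DifferentiableOn ℂ k U :=
      ((hH T).mul (by fun_prop)).mul (by fun_prop)
    have hk0 : ‖k 0‖ = ‖σ T‖ := by simp [hk, ikPhi]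
    rw [← hk0]
    refine Complex.norm_le_of_forall_mem_frontier_norm_le (U := Metric.ball 0 R)
      Metric.isBounded_ball ?_ ?_ (subset_closure (Metric.mem_ball_self hR))
    · refine DifferentiableOn.diffContOnCl ?_
      rw [closure_ball _ hR.ne']
      exact hkd.mono hRU
    intro z hz
    rw [frontier_ball _ hR.ne'] at hz
    have hzR : ‖z‖ = R := by simpa using hz
    have hzU : z ∈ Metric.closedBall 0 R := Metric.sphere_subset_closedBall hz
    have hexp : ‖Complex.exp (z * T)‖ = Real.exp (z.re * T) := by
      rw [Complex.norm_exp]; simp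
    have hnk : ‖k z‖ = ‖z * F z - ikPhi σ z T‖ * Real.exp (z.re * T) * (2 * |z.re| / R) := by
      rw [hk]
      simp only [norm_mul]
      rw [hexp, ik_factor z R hR hzR]
    rw [hnk]
    have hee : Real.exp (-(z.re * T)) * Real.exp (z.re * T) = 1 := by
      rw [← Real.exp_add]; simp
    have hBT : 0 ≤ 2 * B / R / T := by positivity
    rcases lt_trichotomy z.re 0 with hneg | hzero | hpos
    · have h1 := ikPhi_bound σ ρ hσ ε X T hT (fun t ht => hd t (hX.trans_le ht)) hρ z hneg.ne
      have h2 := hB z hzU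
      have h3 : ‖z * F z - ikPhi σ z T‖ ≤ B + ε * (Real.exp (-(z.re * T)) / |z.re|) := by
        have e : z * F z - ikPhi σ z T = (z * F z - ikPhi σ z X) - (ikPhi σ z T - ikPhi σ z X) := by
          ring
        rw [e]
        refine (norm_sub_le _ _).trans (add_le_add h2 (h1.trans ?_))
        refine mul_le_mul_of_nonneg_left ?_ hε.le
        rw [abs_of_neg hneg, div_neg, ← neg_div]
        refine div_le_div_of_nonpos_of_le hneg.le ?_
        linarith [Real.exp_pos (-(z.re * X))]
      have ha : 0 < |z.re| := abs_pos.2 hneg.ne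
      have h4 : |z.re| * Real.exp (z.re * T) ≤ 1 / T := by
        rw [le_div_iff₀ hT0]
        have h5 := Real.add_one_le_exp (-(z.re * T))
        have h6 : |z.re| * T ≤ Real.exp (-(z.re * T)) := by rw [abs_of_neg hneg]; linarith
        calc |z.re| * Real.exp (z.re * T) * T = |z.re| * T * Real.exp (z.re * T) := by ring
          _ ≤ Real.exp (-(z.re * T)) * Real.exp (z.re * T) := by gcongr
          _ = 1 := hee
      calc _ ≤ (B + ε * (Real.exp (-(z.re * T)) / |z.re|)) * Real.exp (z.re * T) * (2 * |z.re| / R) := by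
            gcongr
        _ = 2 * ε / R * (Real.exp (-(z.re * T)) * Real.exp (z.re * T))
            + 2 * B / R * (|z.re| * Real.exp (z.re * T)) := by
            field_simp
            ring
        _ ≤ 2 * ε / R * 1 + 2 * B / R * (1 / T) := by
            rw [hee]; gcongr
        _ = _ := by ring
    · rw [hzero]; simp; positivity
    · have h1 : ‖z * F z - ikPhi σ z T‖ ≤ ε * (Real.exp (-(z.re * T)) / z.re) := by
        rw [hFeq z (hRU hzU) hpos]
        have ht := ikPhi_tendsto σ ρ hσ X1 (fun t ht => hd t (hX1.trans_le ht)) hρ1 z hpos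
        refine le_of_tendsto (ht.sub_const (ikPhi σ z T)).norm ?_
        filter_upwards [eventually_ge_atTop T] with S hS
        refine (ikPhi_bound σ ρ hσ ε T S hS (fun t ht => hd t (hT0.trans_le ht))
          (fun t ht => hρ t (hT.trans ht)) z hpos.ne').trans ?_
        gcongr
        linarith [Real.exp_pos (-(z.re * S))]
      rw [abs_of_pos hpos]
      calc _ ≤ ε * (Real.exp (-(z.re * T)) / z.re) * Real.exp (z.re * T) * (2 * z.re / R) := by
            gcongr
        _ = 2 * ε / R * (Real.exp (-(z.re * T)) * Real.exp (z.re * T)) := by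
            field_simp
        _ = 2 * ε / R := by rw [hee, mul_one]
        _ ≤ _ := by linarith
  rw [tendsto_zero_iff_norm_tendsto_zero, Metric.tendsto_atTop]
  intro η hη
  obtain ⟨X, hX, B, hB⟩ := key (R * η / 4) (by positivity)
  have hlim : Tendsto (fun T : ℝ => 2 * B / R / T) atTop (𝓝 0) :=
    tendsto_const_nhds.div_atTop tendsto_id
  obtain ⟨Y, hY⟩ := eventually_atTop.1 (hlim.eventually_lt_const (u := η / 2) (by positivity))
  refine ⟨max X Y, fun T hT => ?_⟩
  have h1 := hB T ((le_max_left _ _).trans hT)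
  have h2 := hY T ((le_max_right _ _).trans hT)
  have h3 : 2 * (R * η / 4) / R = η / 2 := by field_simp; norm_num
  simp only [dist_zero_right, norm_norm]
  linarith

/-- Finite-form Ingham–Karamata theorem: if `τ ∈ C¹[0,∞)` with `τ'(x) → 0` and
its Laplace transform has an analytic extension to the open rectangle `R_{α,r}`
which is continuous on `R̄_{α,r}`, then `τ(x) → 0` as `x → ∞`. -/
theorem finite_form_ingham_karamata
    (α r : ℝ) (hα : α < 0) (hr : 0 < r)
    (τ τ' : ℝ → ℂ) (F : ℂ → ℂ)
    (hder : ∀ x ∈ Set.Ici (0 : ℝ), HasDerivWithinAt τ (τ' x) (Set.Ici 0) x)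
    (hcont : ContinuousOn τ' (Set.Ici 0))
    (hto0 : Tendsto τ' atTop (nhds 0))
    (hFan : DifferentiableOn ℂ F (Ropen α r))
    (hFcont : ContinuousOn F (Rbar α r))
    (hFeq : ∀ s ∈ Rbar α r, 0 < s.re → F s = Laplace τ s) :
    Tendsto τ atTop (nhds 0) := by
  set σ : ℝ → ℂ := fun t => τ (max t 0) with hσdef
  have hτc : ContinuousOn τ (Ici 0) := fun x hx => (hder x hx).continuousWithinAt
  have hσ : Continuous σ :=
    hτc.comp_continuous (by fun_prop) (fun t => mem_Ici.2 (le_max_right _ _))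
  have heq : ∀ t, 0 ≤ t → σ t = τ t := fun t ht => by simp [hσdef, max_eq_left ht]
  have hL : ∀ s, Laplace τ s = Laplace σ s := by
    intro s
    unfold Laplace
    refine setIntegral_congr_fun measurableSet_Ioi fun t ht => ?_
    simp only [heq t (le_of_lt ht)]
  have hmain : Tendsto σ atTop (nhds 0) := by
    have hm : 0 < min r (min 1 (-α)) := lt_min hr (lt_min one_pos (by linarith))
    have m1 : min r (min 1 (-α)) ≤ r := min_le_left _ _
    have m2 : min r (min 1 (-α)) ≤ 1 := (min_le_right _ _).trans (min_le_left _ _)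
    have m3 : min r (min 1 (-α)) ≤ -α := (min_le_right _ _).trans (min_le_right _ _)
    refine ik_main σ τ' hσ F (min r (min 1 (-α)) / 2) (by positivity) ?_ hto0 (Ropen α r) ?_ ?_ hFan ?_
    · intro t ht
      refine ((hder t ht.le).hasDerivAt (Ici_mem_nhds ht)).congr_of_eventuallyEq ?_
      filter_upwards [Ioi_mem_nhds ht] with u hu using heq u (le_of_lt hu)
    · unfold Ropen
      refine (isOpen_lt ?_ ?_).and ((isOpen_lt ?_ ?_).and (isOpen_lt ?_ ?_)) <;> fun_prop
    · intro z hz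
      have hz' : ‖z‖ ≤ min r (min 1 (-α)) / 2 := by simpa using hz
      have h1 := (abs_le.1 (Complex.abs_re_le_norm z))
      have h2 := Complex.abs_im_le_norm z
      exact ⟨by linarith, by linarith, by linarith⟩
    · intro s hs hpos
      rw [hFeq s ⟨hs.1.le, hs.2.1.le, hs.2.2.le⟩ hpos, hL]
  refine hmain.congr' ?_
  filter_upwards [eventually_ge_atTop 0] with t ht using heq t ht
end

section
/- Let β < α' < α < 0 and r' > r > 0, let τ be a Schwartz function on ℝ supported in [0,∞) such that L{τ;·} has an analytic extension to an open neighborhood of R̄_{α',r'}, and let 0 < h < −α'. Write F_h for the analytic extension of L{τ_h;·} (where τ_h(x) = e^{-hx}τ(x)), which is analytic on {Re s > −h} ∪ (an open neighborhood of −h + R̄_{α',r'}) and continuous on the closure {Re s ≥ −h}. Then for every s with Re s > 0 or s ∈ R̄_{α,r}, F_h(s) = (1/2πi) ∫_{Γ_h} F_h(ζ)/(s−ζ) dζ, where Γ_h is the contour consisting of: the vertical ray {−h+it : t ∈ (−∞,−r']} traversed upward, then from −h−ir' leftward along {σ − ir' : α' ≤ σ ≤ −h}, up along {α' + it : −r'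 ≤ t ≤ r'}, rightward along {σ + ir' : α' ≤ σ ≤ −h} to −h+ir', and finally the vertical ray {−h+it : t ∈ [r',∞)} traversed upward. Consequently τ_h(x) = (1/2πi) ∫_{Γ_h} F_h(ζ) e^{ζx} dζ for every x ≥ 0. -/
open Filter Set MeasureTheory

/-- The complex point `a + b i`. -/
noncomputable def cpt (a b : ℝ) : ℂ := (a : ℂ) + (b : ℂ) * Complex.I

/-- The (improper) contour integral `∫_{Γ_h} Φ(ζ) dζ` along the contour `Γ_h`
consisting of: the vertical ray `{−h+it : t ≤ −r'}` traversed upward, then from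
`−h−ir'` leftward along `{σ−ir' : α' ≤ σ ≤ −h}`, up along `{α'+it : −r' ≤ t ≤ r'}`,
rightward along `{σ+ir' : α' ≤ σ ≤ −h}` to `−h+ir'`, and finally the vertical ray
`{−h+it : t ≥ r'}` traversed upward. -/
noncomputable def contourIntegralGamma (Φ : ℂ → ℂ) (h α' r' : ℝ) : ℂ :=
    (∫ t in Set.Iic (-r'), Φ (cpt (-h) t) * Complex.I)
  - (∫ σ in Set.Icc α' (-h), Φ (cpt σ (-r')))
  + (∫ t in Set.Icc (-r') r', Φ (cpt α' t) * Complex.I)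
  + (∫ σ in Set.Icc α' (-h), Φ (cpt σ r'))
  + (∫ t in Set.Ici r', Φ (cpt (-h) t) * Complex.I)

open scoped FourierTransform in
lemma aux_laplace_fourier (τ : SchwartzMap ℝ ℂ) (hsupp : ∀ x : ℝ, x < 0 → τ x = 0) (t : ℝ) :
    Laplace (⇑τ) ((t : ℂ) * Complex.I) = 𝓕 τ (t / (2 * Real.pi)) := by
  rw [SchwartzMap.fourier_coe, Real.fourier_real_eq_integral_exp_smul, Laplace,
    ← integral_Ici_eq_integral_Ioi, setIntegral_eq_integral_of_forall_compl_eq_zero]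
  · refine integral_congr_ae (Eventually.of_forall fun x => ?_)
    have : ((-2 * Real.pi * x * (t / (2 * Real.pi)) : ℝ) : ℂ) * Complex.I
        = -((t : ℂ) * Complex.I * x) := by
      have hp : (Real.pi : ℂ) ≠ 0 := by exact_mod_cast Real.pi_ne_zero
      push_cast
      field_simp
    simp only [this, smul_eq_mul]
    ring
  · intro x hx
    rw [hsupp x (by simpa using hx), zero_mul]

open scoped FourierTransform in
lemma aux_integrable (τ : SchwartzMap ℝ ℂ) (hsupp : ∀ x : ℝ, x < 0 → τ x = 0) :
    Integrable (fun t : ℝ => Laplace (⇑τ) ((t : ℂ) * Complex.I)) := by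
  simp_rw [aux_laplace_fourier τ hsupp]
  exact (SchwartzMap.integrable (𝓕 τ)).comp_div (by positivity)

open scoped FourierTransform in
lemma aux_inversion (τ : SchwartzMap ℝ ℂ) (hsupp : ∀ x : ℝ, x < 0 → τ x = 0) (x : ℝ) :
    ∫ t : ℝ, Laplace (⇑τ) ((t : ℂ) * Complex.I) * Complex.exp ((t : ℂ) * Complex.I * x)
      = 2 * Real.pi * τ x := by
  have h1 : τ x = ∫ v : ℝ, Complex.exp (((2 * Real.pi * (v * x) : ℝ) : ℂ) * Complex.I) • 𝓕 τ v := by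
    have : τ x = (𝓕⁻ (𝓕 τ)) x := by rw [FourierTransform.fourierInv_fourier_eq]
    rw [this, SchwartzMap.fourierInv_coe, Real.fourierInv_eq']
    simp [mul_comm]
  simp_rw [aux_laplace_fourier τ hsupp]
  have h2 := Measure.integral_comp_div
    (fun v : ℝ => Complex.exp (((2 * Real.pi * (v * x) : ℝ) : ℂ) * Complex.I) • 𝓕 τ v)
    (2 * Real.pi)
  rw [← h1, abs_of_pos (by positivity)] at h2
  rw [Complex.real_smul] at h2
  push_cast at h2
  rw [← h2]
  refine integral_congr_ae (Eventually.of_forall fun t => ?_)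
  have hp : (Real.pi : ℂ) ≠ 0 := by exact_mod_cast Real.pi_ne_zero
  have : (2 * Real.pi * ((t / (2 * Real.pi)) * x)  : ℂ) * Complex.I
        = (t : ℂ) * Complex.I * x := by
      field_simp
  simp only [this, smul_eq_mul]
  ring

lemma aux_cauchy_line (τ : SchwartzMap ℝ ℂ) (hsupp : ∀ x : ℝ, x < 0 → τ x = 0) (z : ℂ)
    (hz : 0 < z.re) :
    ∫ t : ℝ, Laplace (⇑τ) ((t : ℂ) * Complex.I) / (z - (t : ℂ) * Complex.I)
      = 2 * Real.pi * Laplace (⇑τ) z := by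
  have hexp : IntegrableOn (fun x : ℝ => Complex.exp (-z * x)) (Ioi 0) :=
    integrableOn_exp_mul_complex_Ioi (by simpa using hz) 0
  have hprod : Integrable (fun p : ℝ × ℝ => Laplace (⇑τ) ((p.1 : ℂ) * Complex.I) *
      Complex.exp (-z * p.2) * Complex.exp ((p.1 : ℂ) * Complex.I * p.2))
      (volume.prod (volume.restrict (Ioi 0))) := by
    refine Integrable.mul_bdd (c := 1) ((aux_integrable τ hsupp).mul_prod hexp) ?_ ?_
    · exact (Continuous.aestronglyMeasurable (by fun_prop))
    · refine Eventually.of_forall fun p => ?_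
      simp [Complex.norm_exp]
  have h1 : ∀ t : ℝ, Laplace (⇑τ) ((t : ℂ) * Complex.I) / (z - (t : ℂ) * Complex.I)
      = ∫ x in Ioi (0:ℝ), Laplace (⇑τ) ((t : ℂ) * Complex.I) *
      Complex.exp (-z * x) * Complex.exp ((t : ℂ) * Complex.I * x) := by
    intro t
    have h2 := integral_exp_mul_complex_Ioi (a := -z + (t : ℂ) * Complex.I) (by simpa using hz) 0
    simp_rw [mul_assoc (Laplace _ _), ← Complex.exp_add, ← add_mul]
    rw [integral_const_mul, h2]
    have : -z + (t : ℂ) * Complex.I = -(z - (t : ℂ) * Complex.I) := by ring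
    rw [this]
    rw [Complex.ofReal_zero, mul_zero, Complex.exp_zero, neg_div_neg_eq, mul_one_div]
  simp_rw [h1]
  rw [integral_integral_swap hprod]
  simp_rw [mul_right_comm _ (Complex.exp (-z * _)) _]
  simp_rw [integral_mul_const, aux_inversion τ hsupp, Laplace]
  rw [← integral_const_mul]
  simp [mul_assoc]

lemma aux_contour (Φ : ℂ → ℂ) (h α' r' : ℝ) (hr : 0 < r') (hh : α' < -h)
    (hd : ∀ ζ : ℂ, α' ≤ ζ.re → ζ.re ≤ -h → |ζ.im| ≤ r' → DifferentiableAt ℂ Φ ζ)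
    (hi : Integrable (fun t : ℝ => Φ (cpt (-h) t))) :
    contourIntegralGamma Φ h α' r' = Complex.I * ∫ t : ℝ, Φ (cpt (-h) t) := by
  have hc := Complex.integral_boundary_rect_eq_zero_of_differentiableOn Φ
    (cpt α' (-r')) (cpt (-h) r') (by
      intro ζ hζ
      simp only [cpt, Complex.mem_reProdIm] at hζ
      obtain ⟨h1, h2⟩ := hζ
      simp at h1 h2
      rw [uIcc_of_le hh.le] at h1
      rw [uIcc_of_le (by linarith)] at h2
      exact (hd ζ h1.1 h1.2 (abs_le.2 h2)).differentiableWithinAt)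
  simp only [cpt, Complex.add_re, Complex.add_im, Complex.ofReal_re, Complex.ofReal_im,
    Complex.mul_re, Complex.mul_im, Complex.I_re, Complex.I_im, mul_zero, mul_one, zero_add,
    add_zero, sub_self, smul_eq_mul] at hc
  rw [intervalIntegral.integral_of_le hh.le, intervalIntegral.integral_of_le hh.le,
    intervalIntegral.integral_of_le (by linarith), intervalIntegral.integral_of_le (by linarith)]
    at hc
  have hs : ∫ t : ℝ, Φ (cpt (-h) t) = (∫ t in Iic (-r'), Φ (cpt (-h) t)) +
      (∫ t in Ioc (-r') r', Φ (cpt (-h) t)) + ∫ t in Ioi r', Φ (cpt (-h) t) := by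
    rw [← setIntegral_union (by rw [Set.disjoint_left]; intro x hx hx'; exact absurd hx (not_le.2 hx'.1))
      measurableSet_Ioc hi.integrableOn hi.integrableOn,
      Iic_union_Ioc_eq_Iic (by linarith), intervalIntegral.integral_Iic_add_Ioi hi.integrableOn hi.integrableOn]
  rw [contourIntegralGamma]
  simp only [integral_Icc_eq_integral_Ioc, integral_Ici_eq_integral_Ioi, integral_mul_const]
  rw [hs]
  simp only [cpt] at *
  linear_combination (-1 : ℂ) * hc

lemma aux_param {μ : Measure ℝ} (g γ : ℝ → ℂ) (hg : Integrable g μ) (hγ : Measurable γ)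
    (s : ℂ) (δ : ℝ) (hδ : 0 < δ) (hd : ∀ᵐ t ∂μ, 2 * δ ≤ ‖s - γ t‖) :
    DifferentiableAt ℂ (fun s => ∫ t, g t / (s - γ t) ∂μ) s := by
  have hb : ∀ᵐ t ∂μ, ∀ w ∈ Metric.ball s δ, δ ≤ ‖w - γ t‖ := by
    filter_upwards [hd] with t ht w hw
    have h1 : ‖s - γ t‖ ≤ ‖s - w‖ + ‖w - γ t‖ := norm_sub_le_norm_sub_add_norm_sub _ _ _
    rw [Metric.mem_ball, dist_comm, dist_eq_norm] at hw
    linarith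
  have hm : ∀ w : ℂ, AEStronglyMeasurable (fun t => g t / (w - γ t)) μ := fun w => by
    have : AEStronglyMeasurable (fun t => (w - γ t)⁻¹) μ :=
      ((measurable_const.sub hγ).inv).aestronglyMeasurable
    simpa [div_eq_mul_inv] using! hg.1.mul this
  refine (hasDerivAt_integral_of_dominated_loc_of_deriv_le (s := Metric.ball s δ)
    (F := fun s t => g t / (s - γ t)) (F' := fun s t => - g t / (s - γ t) ^ 2)
    (bound := fun t => ‖g t‖ / δ ^ 2)
    (Metric.ball_mem_nhds s hδ) (Eventually.of_forall hm) ?_ ?_ ?_ ?_ ?_).2.differentiableAt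
  · refine Integrable.mono' (hg.norm.div_const δ) (hm s) ?_
    filter_upwards [hb] with t ht
    rw [norm_div]
    gcongr
    exact ht s (Metric.mem_ball_self hδ)
  · have : AEStronglyMeasurable (fun t => ((s - γ t) ^ 2)⁻¹) μ :=
      (((measurable_const.sub hγ).pow_const 2).inv).aestronglyMeasurable
    simpa [div_eq_mul_inv] using! hg.1.neg.mul this
  · filter_upwards [hb] with t ht w hw
    rw [norm_div, norm_neg, norm_pow]
    gcongr
    exact ht w hw
  · exact hg.norm.div_const _
  · filter_upwards [hb] with t ht w hw
    have hne : w - γ t ≠ 0 := norm_pos_iff.1 (hδ.trans_le (ht w hw))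
    have := (hasDerivAt_const w (g t)).div ((hasDerivAt_id w).sub_const (γ t)) hne
    simpa using! this

/-- Cauchy-type integral representation along `Γ_h`: for a Schwartz function `τ`
supported in `[0,∞)` whose Laplace transform has an analytic extension `F` to
(a neighborhood of `R̄_{α',r'}`) ∪ {Re s > 0}, continuous up to `{Re s ≥ 0}`, and
for `0 < h < −α'`, the extension `F_h(s) = F(s+h)` of `L{τ_h;·}` satisfies
`F_h(s) = (1/2πi) ∫_{Γ_h} F_h(ζ)/(s−ζ) dζ` for all `s` with `Re s > 0` or
`s ∈ R̄_{α,r}`, and consequently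
`τ_h(x) = (1/2πi) ∫_{Γ_h} F_h(ζ) e^{ζx} dζ` for all `x ≥ 0`. -/
theorem contour_integral_representation
    (β α' α r r' : ℝ) (hβ : β < α') (hα' : α' < α) (hα : α < 0)
    (hr : 0 < r) (hr' : r < r')
    (τ : SchwartzMap ℝ ℂ) (hsupp : ∀ x : ℝ, x < 0 → τ x = 0)
    (U : Set ℂ) (hU : IsOpen U) (hUR : Rbar α' r' ⊆ U)
    (F : ℂ → ℂ)
    (hFan : DifferentiableOn ℂ F (U ∪ {s : ℂ | 0 < s.re}))
    (hFcont : ContinuousOn F (U ∪ {s : ℂ | 0 ≤ s.re}))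
    (hFeq : ∀ s : ℂ, 0 ≤ s.re → F s = Laplace (⇑τ) s)
    (h : ℝ) (hh0 : 0 < h) (hhα' : h < -α') :
    (∀ s : ℂ, 0 < s.re ∨ s ∈ Rbar α r →
      F (s + (h : ℂ)) =
        (2 * Real.pi * Complex.I)⁻¹ *
          contourIntegralGamma (fun ζ : ℂ => F (ζ + (h : ℂ)) / (s - ζ)) h α' r') ∧
    (∀ x : ℝ, 0 ≤ x →
      Complex.exp (-((h : ℂ) * (x : ℂ))) * τ x =
        (2 * Real.pi * Complex.I)⁻¹ *
          contourIntegralGamma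
            (fun ζ : ℂ => F (ζ + (h : ℂ)) * Complex.exp (ζ * (x : ℂ))) h α' r') := by
  have hrpos : 0 < r' := hr.trans hr'
  have hαh : α' < -h := by linarith
  have hL : ∀ t : ℝ, F (cpt (-h) t + (h : ℂ)) = Laplace (⇑τ) ((t : ℂ) * Complex.I) := by
    intro t
    have : cpt (-h) t + (h : ℂ) = (t : ℂ) * Complex.I := by simp [cpt]
    rw [this]
    exact hFeq _ (by simp)
  have hint := aux_integrable τ hsupp
  have hFd : ∀ ζ : ℂ, α' ≤ ζ.re + h → |ζ.im| ≤ r' →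
      DifferentiableAt ℂ (fun ζ : ℂ => F (ζ + (h : ℂ))) ζ := by
    intro ζ h1 h2
    have hopen : IsOpen (U ∪ {s : ℂ | 0 < s.re}) :=
      hU.union (isOpen_lt continuous_const Complex.continuous_re)
    have hmem : ζ + (h : ℂ) ∈ U ∪ {s : ℂ | 0 < s.re} := by
      by_cases h0 : 0 < ζ.re + h
      · right; simpa using h0
      · left
        exact hUR ⟨by simpa using h1, by simp; linarith, by simpa using h2⟩
    have h3 : DifferentiableAt ℂ F (ζ + (h : ℂ)) := hFan.differentiableAt (hopen.mem_nhds hmem)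
    exact h3.comp ζ (differentiableAt_id.add_const _)
  have hpi : (2 * Real.pi * Complex.I : ℂ) ≠ 0 := Complex.two_pi_I_ne_zero

  have key : ∀ s : ℂ, -h < s.re → F (s + (h : ℂ)) =
      (2 * Real.pi * Complex.I)⁻¹ *
        contourIntegralGamma (fun ζ : ℂ => F (ζ + (h : ℂ)) / (s - ζ)) h α' r' := by
    intro s hs
    have hs' : 0 < (s + (h : ℂ)).re := by simp; linarith
    have he : (fun t : ℝ => F (cpt (-h) t + (h : ℂ)) / (s - cpt (-h) t)) =
        fun t : ℝ => Laplace (⇑τ) ((t : ℂ) * Complex.I) / ((s + (h : ℂ)) - (t : ℂ) * Complex.I) := by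
      funext t
      rw [hL]
      congr 1
      simp [cpt]; ring
    rw [aux_contour _ h α' r' hrpos hαh]
    · rw [he, aux_cauchy_line τ hsupp _ hs', hFeq _ hs'.le]
      field_simp
    · intro ζ h1 h2 h3
      refine (hFd ζ (by linarith) h3).div (by fun_prop) ?_
      intro h0
      have := congrArg Complex.re h0
      simp at this
      linarith
    · rw [he]
      simp_rw [div_eq_mul_inv]
      refine hint.mul_bdd (c := ((s + (h : ℂ)).re)⁻¹) ?_ ?_
      · exact (Measurable.aestronglyMeasurable (by fun_prop))
      · refine Eventually.of_forall fun t => ?_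
        rw [norm_inv]
        gcongr
        have := Complex.re_le_norm (s + (h : ℂ) - (t : ℂ) * Complex.I)
        simpa using this

  have hΩo : IsOpen (Ioi α' ×ℂ Ioo (-r') r') := isOpen_Ioi.reProdIm isOpen_Ioo
  have hΩc : IsPreconnected (Ioi α' ×ℂ Ioo (-r') r') :=
    (((convex_Ioi α').linear_preimage Complex.reLm).inter
      ((convex_Ioo (-r') r').linear_preimage Complex.imLm)).isPreconnected
  have hcpt1 : ∀ a : ℝ, Continuous (fun b : ℝ => cpt a b) := fun a => by
    unfold cpt; fun_prop
  have hcpt2 : ∀ b : ℝ, Continuous (fun a : ℝ => cpt a b) := fun b => by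
    unfold cpt; fun_prop
  have hre : ∀ a b : ℝ, (cpt a b).re = a := fun a b => by simp [cpt]
  have him : ∀ a b : ℝ, (cpt a b).im = b := fun a b => by simp [cpt]
  have hIv : Integrable (fun t : ℝ => F (cpt (-h) t + (h : ℂ)) * Complex.I) := by
    simp_rw [hL]
    exact hint.mul_const _
  have hIh : ∀ b : ℝ, |b| ≤ r' →
      IntegrableOn (fun σ : ℝ => F (cpt σ b + (h : ℂ))) (Icc α' (-h)) := by
    intro b hb
    refine ContinuousOn.integrableOn_Icc ?_
    intro σ hσ
    have h1 := (hFd (cpt σ b) (by rw [hre]; linarith [hσ.1]) (by rwa [him])).continuousAt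
    exact (ContinuousAt.comp (f := fun σ : ℝ => cpt σ b) h1
      (hcpt2 b).continuousAt).continuousWithinAt
  have hIl : IntegrableOn (fun t : ℝ => F (cpt α' t + (h : ℂ)) * Complex.I) (Icc (-r') r') := by
    refine ContinuousOn.integrableOn_Icc ?_
    intro t ht
    have h1 := (hFd (cpt α' t) (by rw [hre]; linarith) (by rw [him]; exact abs_le.2 ht)).continuousAt
    exact ((ContinuousAt.comp (f := fun t : ℝ => cpt α' t) h1
      (hcpt1 α').continuousAt).mul continuousAt_const).continuousWithinAt
  have hdiff : DifferentiableOn ℂ (fun s : ℂ => (2 * Real.pi * Complex.I)⁻¹ *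
      contourIntegralGamma (fun ζ : ℂ => F (ζ + (h : ℂ)) / (s - ζ)) h α' r')
      (Ioi α' ×ℂ Ioo (-r') r') := by
    intro s hs
    rw [Complex.mem_reProdIm] at hs
    obtain ⟨hs1, hs2, hs3⟩ := hs
    rw [mem_Ioi] at hs1
    have hab : 0 < r' - |s.im| := by linarith [abs_lt.2 ⟨hs2, hs3⟩]
    have hvert : ∀ a b : ℝ, r' ≤ |b| → 2 * ((r' - |s.im|) / 2) ≤ ‖s - cpt a b‖ := by
      intro a b hb
      have h1 := Complex.abs_im_le_norm (s - cpt a b)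
      rw [Complex.sub_im, him] at h1
      have h2 := abs_sub_abs_le_abs_sub b s.im
      rw [abs_sub_comm] at h2
      linarith
    have hleft : ∀ b : ℝ, 2 * ((s.re - α') / 2) ≤ ‖s - cpt α' b‖ := by
      intro b
      have h1 := Complex.re_le_norm (s - cpt α' b)
      rw [Complex.sub_re, hre] at h1
      linarith
    refine DifferentiableAt.differentiableWithinAt ?_
    refine DifferentiableAt.const_mul ?_ _
    unfold contourIntegralGamma
    simp_rw [div_mul_eq_mul_div]
    refine ((((aux_param _ _ hIv.integrableOn (hcpt1 (-h)).measurable s _ (half_pos hab) ?_).sub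
      (aux_param _ _ (hIh (-r') ?_) (hcpt2 (-r')).measurable s _ (half_pos hab) ?_)).add
      (aux_param _ _ hIl (hcpt1 α').measurable s _ (half_pos (sub_pos.2 hs1)) ?_)).add
      (aux_param _ _ (hIh r' ?_) (hcpt2 r').measurable s _ (half_pos hab) ?_)).add
      (aux_param _ _ hIv.integrableOn (hcpt1 (-h)).measurable s _ (half_pos hab) ?_)
    · filter_upwards [ae_restrict_mem measurableSet_Iic] with t ht
      exact hvert _ _ (by rw [mem_Iic] at ht; rw [abs_of_neg (by linarith)]; linarith)
    · rw [abs_neg, abs_of_pos hrpos]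
    · exact Eventually.of_forall fun t => hvert _ _ (by rw [abs_neg, abs_of_pos hrpos])
    · exact Eventually.of_forall fun t => hleft _
    · rw [abs_of_pos hrpos]
    · exact Eventually.of_forall fun t => hvert _ _ (by rw [abs_of_pos hrpos])
    · filter_upwards [ae_restrict_mem measurableSet_Ici] with t ht
      exact hvert _ _ (le_trans ht (le_abs_self t))
  have hdF : DifferentiableOn ℂ (fun s : ℂ => F (s + (h : ℂ))) (Ioi α' ×ℂ Ioo (-r') r') := by
    intro s hs
    rw [Complex.mem_reProdIm] at hs
    obtain ⟨hs1, hs2, hs3⟩ := hs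
    rw [mem_Ioi] at hs1
    exact (hFd s (by linarith) (abs_lt.2 ⟨hs2, hs3⟩).le).differentiableWithinAt
  have hEq := (hdF.analyticOnNhd hΩo).eqOn_of_preconnected_of_eventuallyEq
    (hdiff.analyticOnNhd hΩo) hΩc (z₀ := 0)
    (by rw [Complex.mem_reProdIm]; simp; constructor <;> linarith)
    (by
      have hopen : IsOpen {s : ℂ | -h < s.re} := isOpen_lt continuous_const Complex.continuous_re
      filter_upwards [hopen.mem_nhds (show (0 : ℂ) ∈ {s : ℂ | -h < s.re} by simpa using hh0)]
        with s hs
      exact key s hs)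
  refine ⟨?_, ?_⟩
  · rintro s (hs | ⟨h1, h2, h3⟩)
    · exact key s (by linarith)
    · refine hEq ?_
      rw [Complex.mem_reProdIm]
      have := abs_le.1 h3
      exact ⟨by rw [mem_Ioi]; linarith, by linarith, by linarith⟩
  · intro x hx
    have he : (fun t : ℝ => F (cpt (-h) t + (h : ℂ)) * Complex.exp (cpt (-h) t * (x : ℂ))) =
        fun t : ℝ => Complex.exp (-((h : ℂ) * (x : ℂ))) *
          (Laplace (⇑τ) ((t : ℂ) * Complex.I) * Complex.exp ((t : ℂ) * Complex.I * x)) := by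
      funext t
      have : cpt (-h) t * (x : ℂ) = -((h : ℂ) * (x : ℂ)) + (t : ℂ) * Complex.I * x := by
        simp [cpt]; ring
      rw [hL, this, Complex.exp_add]
      ring
    rw [aux_contour _ h α' r' hrpos hαh]
    · rw [he, integral_const_mul, aux_inversion τ hsupp]
      field_simp
    · intro ζ h1 h2 h3
      exact (hFd ζ (by linarith) h3).mul (by fun_prop)
    · rw [he]
      refine Integrable.const_mul (hint.mul_bdd (c := 1) ?_ ?_) _
      · exact (Continuous.aestronglyMeasurable (by fun_prop))
      · refine Eventually.of_forall fun t => ?_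
        simp [Complex.norm_exp]
end
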